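/- arXiv:1010.5341 — 3 statements merged into one kernel-verified Lean document; each statement's English description precedes it below -/
import Mathlib

section
/- Let n and r be coprime positive integers with n > r, n ≥ 10 and n even, and let ε > 0. Then there exists a constant C, depending only on n and ε, such that for every real H ≥ 1 the number of pairs (a_r, a_n) ∈ ℤ² with |a_r| ≤ H, |a_n| ≤ H such that X^n + a_rX^{n-r} + a_n is irreducible over ℚ and the Galois group of its splitting field over ℚ is isomorphic to the alternating group A_n is at most C·H^{1+ε}. -/
open Polynomial

/-!
If the Galois group of a monic separable polynomial is the full alternating group, its discriminant
is a square. For `X^n + a X^(n-r) + b` with `n` even and `b ≠ 0` this makes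
`±(n^n b^r - (n-r)^(n-r) r^r a^n)` a square `y^2`, so each fixed `b` gives solutions of a norm
equation `y^2 - D x^2 = N` with `x = a^(n/2)`, where `D` and `N` are nonzero and only `N` depends
on `b`.

Such an equation has only `O(H^ε)` solutions of size polynomial in `H`. Dividing by the gcd of `x`
and `y`, whose square divides `N`, reduces to coprime solutions. Two coprime solutions with the same
residue `y / x` modulo `N` have a quotient of norm one in `ℤ[√D]`. The residue is a square root of
`D` modulo `N`, which leaves `O(d(N))` possibilities, and elements of norm one grow exponentially,
so only logarithmically many of them are small. Summing over `b` gives `O(H^(1+ε))`.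
-/

section Discriminant

variable {R : Type*} [CommRing R]

theorem discr_eq_neg_one_pow_mul_resultant {f : R[X]} (hf : f.Monic) (hdeg : 0 < f.natDegree) :
    f.discr = (-1) ^ (f.natDegree * (f.natDegree - 1) / 2) *
      f.resultant (derivative f) f.natDegree (f.natDegree - 1) := by
  rw [resultant_deriv (natDegree_pos_iff_degree_pos.mp hdeg), hf.leadingCoeff, mul_one, ← mul_assoc,
    ← pow_add, (Even.add_self _).neg_one_pow, one_mul]

theorem discr_map_of_monic {S : Type*} [CommRing S] [Nontrivial S] (φ : R →+* S) {f : R[X]}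
    (hf : f.Monic) : (f.map φ).discr = φ f.discr := by
  rcases Nat.eq_zero_or_pos f.natDegree with hdeg | hdeg
  · rw [hf.natDegree_eq_zero.mp hdeg, Polynomial.map_one, ← C_1, discr_C, ← C_1, discr_C, φ.map_one]
  have hmap : (f.map φ).natDegree = f.natDegree := hf.natDegree_map φ
  rw [discr_eq_neg_one_pow_mul_resultant (hf.map φ) (hmap ▸ hdeg),
    discr_eq_neg_one_pow_mul_resultant hf hdeg, hmap, derivative_map, resultant_map_map]
  simp only [map_mul, map_pow, map_neg, map_one]

theorem sum_card_Ioi_fin (n : ℕ) : ∑ i : Fin n, (Finset.Ioi i).card = n * (n - 1) / 2 := by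
  simp only [Fin.card_Ioi]
  rw [Fin.sum_univ_eq_sum_range fun i => n - 1 - i, Finset.sum_range_reflect fun i => i,
    Finset.sum_range_id]

theorem prod_prod_compl_sub_eq_det_vandermonde_sq {n : ℕ} (α : Fin n → R) :
    ∏ i, ∏ j ∈ {i}ᶜ, (α i - α j) =
      (-1) ^ (n * (n - 1) / 2) * (Matrix.vandermonde α).det ^ 2 := by
  have hpair (i j : Fin n) : (α i - α j) * (α j - α i) = -1 * (α j - α i) ^ 2 := by ring
  rw [← Finset.prod_prod_Ioi_mul_eq_prod_prod_off_diag fun j i => α i - α j, Matrix.det_vandermonde,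
    ← sum_card_Ioi_fin]
  simp only [hpair, Finset.prod_mul_distrib, Finset.prod_const, Finset.prod_pow_eq_pow_sum,
    Finset.prod_pow]

theorem derivative_prod_X_sub_C_eval {n : ℕ} (α : Fin n → R) (i : Fin n) :
    (derivative (∏ j, (X - C (α j)))).eval (α i) = ∏ j ∈ {i}ᶜ, (α i - α j) := by
  have h := Lagrange.eval_nodal_derivative_eval_node_eq (v := α) (Finset.mem_univ i)
  rw [Lagrange.eval_nodal, ← Finset.compl_singleton] at h
  exact h

theorem discr_prod_X_sub_C [Nontrivial R] {n : ℕ} (α : Fin n → R) :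
    (∏ i, (X - C (α i))).discr = (Matrix.vandermonde α).det ^ 2 := by
  rcases Nat.eq_zero_or_pos n with rfl | hn
  · simpa using discr_C (1 : R)
  set f := ∏ i, (X - C (α i)) with hf
  have hmonic : f.Monic := monic_prod_X_sub_C α _
  have hdeg : f.natDegree = n := by simp [hf, natDegree_finsetProd_X_sub_C_eq_card]
  have hres : f.resultant (derivative f) f.natDegree (f.natDegree - 1) =
      (-1) ^ (n * (n - 1) / 2) * (Matrix.vandermonde α).det ^ 2 := by
    rw [hf, resultant_prod_left, ← prod_prod_compl_sub_eq_det_vandermonde_sq]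
    · refine Finset.prod_congr rfl fun i _ => ?_
      rw [natDegree_X_sub_C, resultant_X_sub_C_left _ _ _ (natDegree_derivative_le f),
        derivative_prod_X_sub_C_eval]
    · simp only [leadingCoeff_X_sub_C, Finset.prod_const_one, ne_eq, one_ne_zero,
        not_false_eq_true]
    · exact natDegree_derivative_le f
  rw [discr_eq_neg_one_pow_mul_resultant hmonic (hdeg ▸ hn), hres, hdeg, ← mul_assoc,
    ← pow_add, (Even.add_self _).neg_one_pow, one_mul]

end Discriminant

section TrinomialDiscriminant

variable {F : Type*} [Field F]

theorem prod_range_sub_pow_mul {m r : ℕ} {ζ : F} (hζ : IsPrimitiveRoot ζ r) (hr : 0 < r)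
    (hco : m.Coprime r) (b y : F) :
    ∏ i ∈ Finset.range r, (b - (ζ ^ m) ^ i * y) = b ^ r - y ^ r := by
  have h := congr_arg (eval b) (X_pow_sub_C_eq_prod (hζ.pow_of_coprime m hco) hr (Eq.refl (y ^ r)))
  simpa only [eval_sub, eval_pow, eval_X, eval_C, eval_prod] using h.symm

theorem resultant_X_pow_sub_C_left {r n : ℕ} {ζ c : F} (hζ : IsPrimitiveRoot ζ r) (hr : 0 < r)
    {f : F[X]} (hf : f.natDegree ≤ n) :
    (X ^ r - C (c ^ r)).resultant f r n = ∏ i ∈ Finset.range r, f.eval (ζ ^ i * c) := by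
  have hprod := X_pow_sub_C_eq_prod hζ hr (Eq.refl (c ^ r))
  have hdeg : (∏ i ∈ Finset.range r, (X - C (ζ ^ i * c))).natDegree = r := by
    rw [← hprod, natDegree_X_pow_sub_C]
  have h := resultant_prod_left (Finset.range r) (fun i => X - C (ζ ^ i * c)) f n
    (by simp only [leadingCoeff_X_sub_C, Finset.prod_const_one, ne_eq, one_ne_zero,
      not_false_eq_true]) hf
  simp only [natDegree_X_sub_C, resultant_X_sub_C_left _ _ _ hf] at h
  rw [hdeg] at h
  rw [hprod, h]

theorem resultant_X_pow_sub_C_trinomial [IsAlgClosed F] {m n : ℕ} (hm : 0 < m) (hmn : m < n)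
    (hco : m.Coprime n) [NeZero ((n - m : ℕ) : F)] (a b d : F) :
    (X ^ (n - m) - C d).resultant (trinomial 0 m n b a 1) (n - m) n =
      b ^ (n - m) - (-1) ^ (n - m) * d ^ m * (d + a) ^ (n - m) := by
  have hr : 0 < n - m := Nat.sub_pos_of_lt hmn
  have hcor : m.Coprime (n - m) := (Nat.coprime_sub_self_right hmn.le).mpr hco
  obtain ⟨ζ, hζ⟩ := HasEnoughRootsOfUnity.exists_primitiveRoot F (n - m)
  obtain ⟨c, rfl⟩ := IsAlgClosed.exists_pow_nat_eq d hr
  have hdeg : (trinomial 0 m n b a 1).natDegree = n := trinomial_natDegree hm hmn one_ne_zero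
  have heval (i : ℕ) : (trinomial 0 m n b a 1).eval (ζ ^ i * c) =
      b - (ζ ^ m) ^ i * -(c ^ m * (c ^ (n - m) + a)) := by
    have hroot : (ζ ^ i) ^ (n - m) = 1 := by rw [pow_right_comm, hζ.pow_eq_one, one_pow]
    have hpow : (ζ ^ i * c) ^ n = (ζ ^ i * c) ^ m * c ^ (n - m) := by
      rw [← pow_mul_pow_sub (ζ ^ i * c) hmn.le, mul_pow _ _ (n - m), hroot, one_mul]
    simp only [trinomial_def, eval_add, eval_mul, eval_C, eval_pow, eval_X, hpow]
    ring
  rw [resultant_X_pow_sub_C_left hζ hr hdeg.le, Finset.prod_congr rfl fun i _ => heval i,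
    prod_range_sub_pow_mul hζ hr hcor, neg_pow, mul_pow, pow_right_comm, mul_assoc]

theorem derivative_trinomial {m n : ℕ} (hm : 0 < m) (hmn : m < n) (hn : (n : F) ≠ 0) (a b : F) :
    derivative (trinomial 0 m n b a 1) =
      X ^ (m - 1) * (C (n : F) * (X ^ (n - m) - C (-(m * a / n)))) := by
  have hX : (X : F[X]) ^ (n - 1) = X ^ (m - 1) * X ^ (n - m) := by
    rw [← pow_add]; congr 1; omega
  have hC : C (n : F) * C (m * a / n) = C (m : F) * C a := by
    rw [← C_mul, ← C_mul, mul_div_cancel₀ _ hn]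
  simp only [trinomial_def, derivative_add, derivative_mul, derivative_C, derivative_X_pow, hX,
    C_neg, C_1, derivative_one, Nat.cast_zero, C_0]
  linear_combination -X ^ (m - 1) * hC

theorem natCast_pow_mul_neg_div_pow {m n : ℕ} (hmn : m ≤ n) (hn : (n : F) ≠ 0) (a : F) :
    n ^ n * ((-1) ^ (n - m) * (-(m * a / n)) ^ m * (-(m * a / n) + a) ^ (n - m)) =
      (-1) ^ n * m ^ m * ((n - m : ℕ) : F) ^ (n - m) * a ^ n := by
  have hd : n * -(m * a / n) = -1 * (m * a) := by field_simp
  have hda : n * (-(m * a / n) + a) = (n - m : ℕ) * a := by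
    rw [Nat.cast_sub hmn]; field_simp; ring
  calc n ^ n * ((-1) ^ (n - m) * (-(m * a / n)) ^ m * (-(m * a / n) + a) ^ (n - m))
      = (-1) ^ (n - m) * (n * -(m * a / n)) ^ m * (n * (-(m * a / n) + a)) ^ (n - m) := by
        rw [← pow_mul_pow_sub (n : F) hmn, mul_pow, mul_pow]; ring
    _ = (-1) ^ n * m ^ m * ((n - m : ℕ) : F) ^ (n - m) * a ^ n := by
        rw [hda, hd, ← pow_mul_pow_sub (-1 : F) hmn, ← pow_mul_pow_sub a hmn]
        simp only [mul_pow]; ring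

theorem resultant_trinomial_derivative [IsAlgClosed F] [CharZero F] {m n : ℕ} (hm : 0 < m)
    (hmn : m < n) (hco : m.Coprime n) (a b : F) :
    (trinomial 0 m n b a 1).resultant (derivative (trinomial 0 m n b a 1)) n (n - 1) =
      b ^ (m - 1) *
        (n ^ n * b ^ (n - m) - (-1) ^ n * m ^ m * ((n - m : ℕ) : F) ^ (n - m) * a ^ n) := by
  have hn : (n : F) ≠ 0 := Nat.cast_ne_zero.mpr (by omega)
  have : NeZero ((n - m : ℕ) : F) := ⟨Nat.cast_ne_zero.mpr (by omega)⟩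
  set d : F := -(m * a / n) with hd
  have hdeg : (trinomial 0 m n b a 1).natDegree = n := trinomial_natDegree hm hmn one_ne_zero
  have hcoeff : (trinomial 0 m n b a 1).coeff 0 = b := trinomial_trailing_coeff' hm hmn
  have hX : (X ^ (m - 1) : F[X]).natDegree = m - 1 := natDegree_X_pow _
  have hXC : (C (n : F) * (X ^ (n - m) - C d)).natDegree = n - m := by
    rw [natDegree_C_mul hn, natDegree_X_pow_sub_C]
  have hsplit := resultant_mul_right (trinomial 0 m n b a 1) (X ^ (m - 1))
    (C (n : F) * (X ^ (n - m) - C d)) n hdeg.le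
  rw [hX, hXC, show m - 1 + (n - m) = n - 1 by omega, resultant_X_pow_right _ _ _ hdeg.le, hcoeff,
    resultant_C_mul_right, resultant_comm _ (X ^ (n - m) - C d),
    resultant_X_pow_sub_C_trinomial hm hmn hco] at hsplit
  have hsign : (-1 : F) ^ (n * (m - 1)) * (-1) ^ (n * (n - m)) = 1 := by
    rw [← pow_add, ← mul_add, show m - 1 + (n - m) = n - 1 by omega]
    exact (Nat.even_mul_pred_self n).neg_one_pow
  have hpow := natCast_pow_mul_neg_div_pow hmn.le hn a
  rw [← hd] at hpow
  rw [derivative_trinomial hm hmn hn, ← hd, hsplit]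
  linear_combination (b ^ (m - 1) * n ^ n *
    (b ^ (n - m) - (-1) ^ (n - m) * d ^ m * (d + a) ^ (n - m))) * hsign - b ^ (m - 1) * hpow

theorem discr_trinomial [CharZero F] {m n : ℕ} (hm : 0 < m) (hmn : m < n) (hco : m.Coprime n)
    (a b : F) :
    (trinomial 0 m n b a 1).discr = (-1) ^ (n * (n - 1) / 2) * (b ^ (m - 1) *
      (n ^ n * b ^ (n - m) - (-1) ^ n * m ^ m * ((n - m : ℕ) : F) ^ (n - m) * a ^ n)) := by
  let φ := algebraMap F (AlgebraicClosure F)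
  have hdeg : (trinomial 0 m n (φ b) (φ a) 1).natDegree = n :=
    trinomial_natDegree hm hmn one_ne_zero
  have hmap : (trinomial 0 m n b a 1).map φ = trinomial 0 m n (φ b) (φ a) 1 := by
    simp only [trinomial_def, Polynomial.map_add, Polynomial.map_mul, Polynomial.map_pow, map_C,
      map_X, φ.map_one]
  apply φ.injective
  rw [← discr_map_of_monic φ (trinomial_monic hm hmn), hmap,
    discr_eq_neg_one_pow_mul_resultant (trinomial_monic hm hmn) (by omega), hdeg,
    resultant_trinomial_derivative hm hmn hco]
  simp only [map_mul, map_sub, map_pow, map_neg, map_one, map_natCast]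

end TrinomialDiscriminant

section AlternatingGaloisGroup

theorem eq_alternatingGroup_of_card_eq {α : Type*} [Fintype α] [DecidableEq α]
    {G : Subgroup (Equiv.Perm α)} (hG : Nat.card G = Nat.card (alternatingGroup α)) :
    G = alternatingGroup α := by
  rcases subsingleton_or_nontrivial α with hα | hα
  · exact Subsingleton.elim _ _
  · apply Equiv.Perm.eq_alternatingGroup_of_index_eq_two
    have hcard := two_mul_nat_card_alternatingGroup (α := α)
    rw [← G.index_mul_card, hG] at hcard
    exact (Nat.eq_of_mul_eq_mul_right Nat.card_pos hcard).symm

theorem map_det_vandermonde_of_permutes {R : Type*} [CommRing R] {n : ℕ} (τ : R →+* R)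
    {α : Fin n → R} {π : Equiv.Perm (Fin n)} (h : ∀ i, τ (α i) = α (π i)) :
    τ (Matrix.vandermonde α).det = π.sign * (Matrix.vandermonde α).det := by
  rw [← Matrix.det_permute, RingHom.map_det]
  congr 1
  ext i j
  simp only [RingHom.mapMatrix_apply, Matrix.map_apply, Matrix.vandermonde_apply, map_pow, h,
    Matrix.submatrix_apply, id_eq]

variable {F E : Type*} [Field F] [Field E] [Algebra F E] {p : F[X]}

theorem map_eq_prod_X_sub_C_of_equiv_rootSet (hmonic : p.Monic)
    (hsep : p.Separable) (hsplit : (p.map (algebraMap F E)).Splits) {n : ℕ}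
    (e : Fin n ≃ p.rootSet E) : p.map (algebraMap F E) = ∏ i, (X - C (e i : E)) := by
  classical
  have hnodup : (p.map (algebraMap F E)).roots.Nodup := nodup_roots hsep.map
  have hprod : ∏ x ∈ (p.map (algebraMap F E)).roots.toFinset, (X - C x) =
      ∏ x : p.rootSet E, (X - C (x : E)) :=
    Finset.prod_subtype _ (fun x => by rw [rootSet_def, aroots, Finset.mem_coe]) _
  rw [Equiv.prod_comp e fun x => X - C (x : E), ← hprod, Finset.prod, Multiset.toFinset_val,
    hnodup.dedup]
  exact hsplit.eq_prod_roots_of_monic (hmonic.map _)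

theorem isSquare_discr_of_galActionHom_range_le (hmonic : p.Monic) (hsep : p.Separable)
    [IsGalois F E] [hsplit : Fact (p.map (algebraMap F E)).Splits] [DecidableEq (p.rootSet E)]
    (hrange : (Gal.galActionHom p E).range ≤ alternatingGroup (p.rootSet E)) :
    IsSquare p.discr := by
  obtain ⟨e⟩ : Nonempty (Fin _ ≃ p.rootSet E) := ⟨(Fintype.equivFin _).symm⟩
  let δ : E := (Matrix.vandermonde fun i => (e i : E)).det
  have hδ : algebraMap F E p.discr = δ ^ 2 := by
    rw [← discr_map_of_monic _ hmonic,
      map_eq_prod_X_sub_C_of_equiv_rootSet hmonic hsep hsplit.out e, discr_prod_X_sub_C]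
  have hfixed (τ : Gal(E/F)) : τ δ = δ := by
    let σ := Gal.galActionHom p E (Gal.restrict p E τ)
    have hσ : Equiv.Perm.sign σ = 1 := Equiv.Perm.mem_alternatingGroup.mp (hrange ⟨_, rfl⟩)
    have hroots (i) : τ (e i) = e (e.symm.permCongr σ i) := by
      rw [← Gal.galActionHom_restrict p E τ (e i), Equiv.permCongr_apply, Equiv.symm_symm,
        Equiv.apply_symm_apply]
    have h := map_det_vandermonde_of_permutes (τ : E →+* E) hroots
    rw [Equiv.Perm.sign_permCongr, hσ, Units.val_one, Int.cast_one, one_mul] at h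
    exact h
  obtain ⟨d, hd⟩ := (InfiniteGalois.mem_range_algebraMap_iff_fixed δ).mpr hfixed
  refine ⟨d, (algebraMap F E).injective ?_⟩
  rw [hδ, ← hd, map_mul, sq]

theorem isSquare_discr_of_gal_mulEquiv_alternatingGroup (hmonic : p.Monic) (hsep : p.Separable)
    {n : ℕ} (hdeg : p.natDegree = n) (φ : p.Gal ≃* alternatingGroup (Fin n)) :
    IsSquare p.discr := by
  classical
  subst hdeg
  have hsplit := SplittingField.splits p
  have : Fact (p.map (algebraMap F p.SplittingField)).Splits := ⟨hsplit⟩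
  have : IsGalois F p.SplittingField := IsGalois.of_separable_splitting_field hsep
  let e : Fin p.natDegree ≃ p.rootSet p.SplittingField :=
    (Fintype.equivFinOfCardEq (card_rootSet_eq_natDegree hsep hsplit)).symm
  have hinj := Gal.galActionHom_injective p p.SplittingField
  refine isSquare_discr_of_galActionHom_range_le (E := p.SplittingField) hmonic hsep
    (eq_alternatingGroup_of_card_eq ?_).le
  rw [← Nat.card_congr (MonoidHom.ofInjective hinj).toEquiv, Nat.card_congr φ.toEquiv,
    Nat.card_congr e.altCongrHom.toEquiv]

end AlternatingGaloisGroup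

section NormOne

variable {D : ℤ} {z w : ℤ√D}

theorem sq_re_eq_of_norm_eq_one (hz : z.norm = 1) : z.re ^ 2 = 1 + D * z.im ^ 2 := by
  rw [Zsqrtd.norm_def] at hz
  linear_combination hz

theorem two_mul_le_of_pell {u v u' v' : ℤ} (hD : 0 < D) (h : u ^ 2 = 1 + D * v ^ 2)
    (h' : u' ^ 2 = 1 + D * v' ^ 2) (hu : 0 ≤ u) (hu' : 0 ≤ u') (hv : 0 ≤ v) (hvv : v < v') :
    2 * v ≤ v' := by
  -- The quotient of the two solutions is a solution with both entries at least `1`.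
  have hvu : v < u := by nlinarith
  have him : u' * v < u * v' := by
    refine lt_of_pow_lt_pow_left₀ 2 (mul_nonneg hu (hv.trans hvv.le)) ?_
    nlinarith
  have hre : D * v * v' < u * u' := by
    refine lt_of_pow_lt_pow_left₀ 2 (mul_nonneg hu hu') ?_
    nlinarith
  calc 2 * v ≤ u * 1 + v * 1 := by omega
    _ ≤ u * (u * v' - u' * v) + v * (u * u' - D * v * v') := by gcongr <;> omega
    _ = v' := by linear_combination v' * h

theorem two_mul_abs_im_le (hD : D ≠ 0) (hz : z.norm = 1) (hw : w.norm = 1)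
    (h : |z.im| < |w.im|) : 2 * |z.im| ≤ |w.im| := by
  have hz' := sq_re_eq_of_norm_eq_one hz
  have hw' := sq_re_eq_of_norm_eq_one hw
  rcases lt_or_gt_of_ne hD with hneg | hpos
  · have : |w.im| ≤ 1 := by
      by_contra! hlt
      nlinarith [sq_abs w.im, sq_nonneg w.re]
    omega
  · rw [← sq_abs z.re, ← sq_abs z.im] at hz'
    rw [← sq_abs w.re, ← sq_abs w.im] at hw'
    exact two_mul_le_of_pell hpos hz' hw' (abs_nonneg _) (abs_nonneg _) (abs_nonneg _) h

theorem abs_im_le_of_log_eq (hD : D ≠ 0) (hz : z.norm = 1) (hw : w.norm = 1)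
    (hsign : SignType.sign z.im = SignType.sign w.im)
    (hlog : Nat.log 2 z.im.natAbs = Nat.log 2 w.im.natAbs) : |w.im| ≤ |z.im| := by
  by_contra! hlt
  have hzim : z.im ≠ 0 := by
    rw [← sign_ne_zero, hsign, sign_ne_zero, ← abs_pos]
    exact (abs_nonneg _).trans_lt hlt
  have hgap : z.im.natAbs * 2 ≤ w.im.natAbs := by
    zify
    linarith [two_mul_abs_im_le hD hz hw hlt]
  have := Nat.log_mono_right (b := 2) hgap
  rw [Nat.log_mul_base one_lt_two (Int.natAbs_ne_zero.mpr hzim)] at this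
  omega

theorem eq_of_norm_eq_one_of_log_eq (hD : D ≠ 0) (hz : z.norm = 1) (hw : w.norm = 1)
    (hre : SignType.sign z.re = SignType.sign w.re) (him : SignType.sign z.im = SignType.sign w.im)
    (hlog : Nat.log 2 z.im.natAbs = Nat.log 2 w.im.natAbs) : z = w := by
  have habs : |z.im| = |w.im| :=
    le_antisymm (abs_im_le_of_log_eq hD hw hz him.symm hlog.symm)
      (abs_im_le_of_log_eq hD hz hw him hlog)
  have himeq : z.im = w.im := by rw [← sign_mul_abs z.im, him, habs, sign_mul_abs]
  have hsq : |z.re| = |w.re| := by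
    rw [← sq_eq_sq_iff_abs_eq_abs, sq_re_eq_of_norm_eq_one hz, sq_re_eq_of_norm_eq_one hw, himeq]
  exact Zsqrtd.ext (by rw [← sign_mul_abs z.re, hre, hsq, sign_mul_abs]) himeq

theorem card_le_of_norm_eq_one (hD : D ≠ 0) {B : ℕ} {S : Finset (ℤ√D)}
    (hS : ∀ z ∈ S, z.norm = 1 ∧ z.im.natAbs ≤ B) : S.card ≤ 9 * (Nat.log 2 B + 1) := by
  let signsAndLog (z : ℤ√D) : SignType × SignType × ℕ :=
    (SignType.sign z.re, SignType.sign z.im, Nat.log 2 z.im.natAbs)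
  have hmaps : Set.MapsTo signsAndLog S
      (Finset.univ ×ˢ Finset.univ ×ˢ Finset.range (Nat.log 2 B + 1) :
        Finset (SignType × SignType × ℕ)) := fun z hz => by
    simp only [signsAndLog, Finset.coe_product, Finset.coe_univ, Set.mem_prod, Set.mem_univ,
      Finset.coe_range, Set.mem_Iio, true_and, Nat.lt_succ_iff]
    exact Nat.log_mono_right (hS z hz).2
  have hinj : Set.InjOn signsAndLog S := fun z hz w hw hzw => by
    simp only [signsAndLog, Prod.mk.injEq] at hzw
    exact eq_of_norm_eq_one_of_log_eq hD (hS z hz).1 (hS w hw).1 hzw.1 hzw.2.1 hzw.2.2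
  refine (Finset.card_le_card_of_injOn signsAndLog hmaps hinj).trans_eq ?_
  rw [Finset.card_product, Finset.card_product, Finset.card_range, Finset.card_univ,
    show Fintype.card SignType = 3 from rfl]
  ring

end NormOne

section SquareRootsMod

theorem four_mul_mul_sub_eq_zero {R : Type*} [CommRing R] {D s t u : R} (hs : s ^ 2 = D)
    (ht : t ^ 2 = D) (hu : u ^ 2 = D) (htu : t - s ∣ u - s) (hut : u - s ∣ t - s) :
    4 * D * (t - u) = 0 := by
  obtain ⟨x, hx⟩ := htu
  obtain ⟨y, hy⟩ := hut
  have htprod : (t - s) * (t + s) = 0 := by linear_combination ht - hs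
  have huprod : (u - s) * (u + s) = 0 := by linear_combination hu - hs
  have hplus : (t + s) * (t - u) = 0 := by linear_combination (1 - x) * htprod - (t + s) * hx
  have hminus : (t - s) * (t - u) = 0 := by
    linear_combination htprod - y * huprod - (u + s) * hy
  linear_combination 2 * s * (hplus - hminus) - 4 * (t - u) * hs

variable {m : ℕ} [NeZero m]

theorem dvd_of_gcd_val_dvd_val {x y : ZMod m} (h : x.val.gcd m ∣ y.val) : x ∣ y := by
  obtain ⟨k, hk⟩ := h
  have hgcd := congr_arg (Int.cast : ℤ → ZMod m) (Nat.gcd_eq_gcd_ab x.val m)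
  push_cast [ZMod.natCast_zmod_val, ZMod.natCast_self] at hgcd
  refine ⟨x.val.gcdA m * k, ?_⟩
  rw [← ZMod.natCast_zmod_val y, hk, Nat.cast_mul, hgcd]
  ring

theorem card_le_of_nsmul_sub_eq_zero {G : Type*} [AddCommGroup G] [Finite G] [IsAddCyclic G]
    {k : ℕ} (hk : 0 < k) {T : Finset G} (hT : ∀ t ∈ T, ∀ u ∈ T, k • (t - u) = 0) : T.card ≤ k := by
  classical
  have := Fintype.ofFinite G
  rcases T.eq_empty_or_nonempty with rfl | ⟨u, hu⟩
  · exact Nat.zero_le k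
  · refine (Finset.card_le_card_of_injOn (· - u) (fun t ht => ?_) (sub_left_injective.injOn)).trans
      (IsAddCyclic.card_nsmul_eq_zero_le hk)
    exact Finset.mem_filter.mpr ⟨Finset.mem_univ _, hT t ht u hu⟩

theorem card_le_of_sq_eq_intCast {D : ℤ} (hD : D ≠ 0) {T : Finset (ZMod m)}
    (hT : ∀ t ∈ T, t ^ 2 = D) : T.card ≤ 4 * D.natAbs * m.divisors.card := by
  rcases T.eq_empty_or_nonempty with rfl | ⟨s, hs⟩
  · exact Nat.zero_le _
  -- Roots `t` with the same `gcd (t - s) m` differ by `4 * D`-torsion.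
  let gcdClass (t : ZMod m) : ℕ := (t - s).val.gcd m
  have hmaps : ∀ t ∈ T, gcdClass t ∈ m.divisors := fun t _ =>
    Nat.mem_divisors.mpr ⟨Nat.gcd_dvd_right _ _, NeZero.ne m⟩
  have hdvd {t u : ZMod m} (h : gcdClass t = gcdClass u) : t - s ∣ u - s :=
    dvd_of_gcd_val_dvd_val (h.dvd.trans (Nat.gcd_dvd_left _ _))
  have hfiber : ∀ d ∈ m.divisors, (T.filter fun t => gcdClass t = d).card ≤ 4 * D.natAbs := by
    refine fun d _ => card_le_of_nsmul_sub_eq_zero (by positivity) fun t ht u hu => ?_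
    obtain ⟨htT, rfl⟩ := Finset.mem_filter.mp ht
    obtain ⟨huT, hut⟩ := Finset.mem_filter.mp hu
    have h := four_mul_mul_sub_eq_zero (hT s hs) (hT t htT) (hT u huT) (hdvd hut.symm) (hdvd hut)
    rw [mul_nsmul, natAbs_nsmul_eq_zero, zsmul_eq_mul, nsmul_eq_mul]
    push_cast
    linear_combination h
  exact Finset.card_le_mul_card_image_of_maps_to hmaps _ hfiber

end SquareRootsMod

section NormForm

variable {D : ℤ} {m : ℕ}

/-- The residue class `x / y` modulo `m` of an element `x + y√D`; it is meaningful when `y` is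
invertible modulo `m`. -/
def residueSlope (m : ℕ) (z : ℤ√D) : ZMod m := z.re * (z.im : ZMod m)⁻¹

theorem sq_re_eq_mul_sq_im {z : ℤ√D} (hm : (m : ℤ) ∣ z.norm) :
    (z.re : ZMod m) ^ 2 = D * (z.im : ZMod m) ^ 2 := by
  have h := (ZMod.intCast_zmod_eq_zero_iff_dvd _ m).mpr hm
  rw [Zsqrtd.norm_def] at h
  push_cast at h
  linear_combination h

theorem isUnit_im_of_isCoprime {z : ℤ√D} (hz : IsCoprime z.re z.im) (hm : (m : ℤ) ∣ z.norm) :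
    IsUnit (z.im : ZMod m) := by
  obtain ⟨a, b, hab⟩ := (hz.map (Int.castRingHom (ZMod m))).pow_left (m := 2)
  simp only [eq_intCast, sq_re_eq_mul_sq_im hm] at hab
  exact IsUnit.of_mul_eq_one (a * D * z.im + b) (by linear_combination hab)

theorem residueSlope_mul_im {z : ℤ√D} (hz : IsCoprime z.re z.im) (hm : (m : ℤ) ∣ z.norm) :
    residueSlope m z * z.im = z.re := by
  rw [residueSlope, mul_assoc, ZMod.inv_mul_of_unit _ (isUnit_im_of_isCoprime hz hm), mul_one]

theorem residueSlope_sq {z : ℤ√D} (hz : IsCoprime z.re z.im) (hm : (m : ℤ) ∣ z.norm) :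
    residueSlope m z ^ 2 = D := by
  have h := sq_re_eq_mul_sq_im hm
  rw [← residueSlope_mul_im hz hm, mul_pow] at h
  exact ((isUnit_im_of_isCoprime hz hm).pow 2).mul_right_cancel h

theorem dvd_mul_star_of_residueSlope_eq {z w : ℤ√D} (hz : IsCoprime z.re z.im)
    (hw : IsCoprime w.re w.im) (hmz : (m : ℤ) ∣ z.norm) (hmw : (m : ℤ) ∣ w.norm)
    (h : residueSlope m z = residueSlope m w) :
    ((m : ℤ) : ℤ√D) ∣ z * star w := by
  have hzre := residueSlope_mul_im hz hmz
  have hwre := residueSlope_mul_im hw hmw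
  have hsq := residueSlope_sq hw hmw
  rw [h] at hzre
  rw [Zsqrtd.intCast_dvd]
  constructor
  all_goals
    rw [← ZMod.intCast_zmod_eq_zero_iff_dvd]
    simp only [Zsqrtd.re_mul, Zsqrtd.im_mul, Zsqrtd.re_star, Zsqrtd.im_star]
    push_cast
    rw [← hzre, ← hwre]
  · linear_combination z.im * w.im * hsq
  · ring

theorem exists_norm_one_eq_mul {N : ℤ} (hN : N ≠ 0) {z w : ℤ√D} (hz : z.norm = N)
    (hw : w.norm = N) (h : (N : ℤ√D) ∣ z * star w) {B : ℕ} (hzre : z.re.natAbs ≤ B)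
    (hzim : z.im.natAbs ≤ B) (hwre : w.re.natAbs ≤ B) (hwim : w.im.natAbs ≤ B) :
    ∃ q : ℤ√D, z = q * w ∧ q.norm = 1 ∧ q.im.natAbs ≤ 2 * B ^ 2 := by
  obtain ⟨q, hq⟩ := h
  refine ⟨q, Zsqrtd.eq_of_smul_eq_smul_left hN ?_, ?_, ?_⟩
  · have hwstar : (N : ℤ√D) = w * star w := by rw [← hw, Zsqrtd.norm_eq_mul_conj]
    rw [← mul_assoc, ← hq, hwstar]
    ring
  · have hnorm := congr_arg Zsqrtd.norm hq
    rw [Zsqrtd.norm_mul, Zsqrtd.norm_mul, Zsqrtd.norm_conj, Zsqrtd.norm_intCast, hz, hw] at hnorm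
    exact (mul_eq_left₀ (mul_ne_zero hN hN)).mp hnorm.symm
  · have him : N * q.im = z.im * w.re - z.re * w.im := by
      have := congr_arg Zsqrtd.im hq
      rw [Zsqrtd.im_smul, Zsqrtd.im_mul, Zsqrtd.re_star, Zsqrtd.im_star] at this
      linear_combination -this
    calc q.im.natAbs ≤ (N * q.im).natAbs := by
          rw [Int.natAbs_mul]; exact Nat.le_mul_of_pos_left _ (Int.natAbs_pos.mpr hN)
      _ ≤ z.im.natAbs * w.re.natAbs + z.re.natAbs * w.im.natAbs := by
          rw [him, ← Int.natAbs_mul, ← Int.natAbs_mul]; exact Int.natAbs_sub_le _ _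
      _ ≤ B * B + B * B := by gcongr
      _ = 2 * B ^ 2 := by ring

theorem card_le_of_norm_eq_of_residueSlope_eq (hD : D ≠ 0) {N : ℤ} (hN : N ≠ 0) {B : ℕ}
    {s : ZMod N.natAbs} {S : Finset (ℤ√D)}
    (hS : ∀ z ∈ S, z.norm = N ∧ z.re.natAbs ≤ B ∧ z.im.natAbs ≤ B)
    (hcop : ∀ z ∈ S, IsCoprime z.re z.im) (hslope : ∀ z ∈ S, residueSlope N.natAbs z = s) :
    S.card ≤ 9 * (Nat.log 2 (2 * B ^ 2) + 1) := by
  rcases S.eq_empty_or_nonempty with rfl | ⟨w, hw⟩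
  · exact Nat.zero_le _
  have hdvd (z) (hz : z ∈ S) : (N.natAbs : ℤ) ∣ z.norm := by
    rw [(hS z hz).1, Int.natAbs_dvd]
  have hquot (z : S) : ∃ q : ℤ√D, z = q * w ∧ q.norm = 1 ∧ q.im.natAbs ≤ 2 * B ^ 2 := by
    obtain ⟨z, hz⟩ := z
    have h := dvd_mul_star_of_residueSlope_eq (hcop z hz) (hcop w hw) (hdvd z hz) (hdvd w hw)
      ((hslope z hz).trans (hslope w hw).symm)
    refine exists_norm_one_eq_mul hN (hS z hz).1 (hS w hw).1 ?_ (hS z hz).2.1 (hS z hz).2.2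
      (hS w hw).2.1 (hS w hw).2.2
    rw [Zsqrtd.intCast_dvd] at h ⊢
    simpa only [Int.natAbs_dvd] using h
  choose q hq hqnorm using hquot
  have hinj : Function.Injective q := fun z z' h => by
    rw [Subtype.ext_iff, hq z, hq z', h]
  classical
  rw [← S.card_attach, ← Finset.card_image_of_injective _ hinj]
  refine card_le_of_norm_eq_one hD fun x hx => ?_
  obtain ⟨z, -, rfl⟩ := Finset.mem_image.mp hx
  exact hqnorm z

theorem card_le_of_norm_eq_of_isCoprime (hD : D ≠ 0) {N : ℤ} (hN : N ≠ 0) {B : ℕ}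
    {S : Finset (ℤ√D)} (hS : ∀ z ∈ S, z.norm = N ∧ z.re.natAbs ≤ B ∧ z.im.natAbs ≤ B)
    (hcop : ∀ z ∈ S, IsCoprime z.re z.im) :
    S.card ≤ 9 * (Nat.log 2 (2 * B ^ 2) + 1) * (4 * D.natAbs * N.natAbs.divisors.card) := by
  have : NeZero N.natAbs := ⟨Int.natAbs_ne_zero.mpr hN⟩
  have hfiber : ∀ s ∈ S.image (residueSlope N.natAbs),
      (S.filter fun z => residueSlope N.natAbs z = s).card ≤
        9 * (Nat.log 2 (2 * B ^ 2) + 1) := fun s _ =>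
    card_le_of_norm_eq_of_residueSlope_eq hD hN (fun z hz => hS z (Finset.mem_filter.mp hz).1)
      (fun z hz => hcop z (Finset.mem_filter.mp hz).1) fun z hz => (Finset.mem_filter.mp hz).2
  refine (Finset.card_le_mul_card_image S _ hfiber).trans (Nat.mul_le_mul_left _ ?_)
  refine card_le_of_sq_eq_intCast hD fun t ht => ?_
  obtain ⟨z, hz, rfl⟩ := Finset.mem_image.mp ht
  exact residueSlope_sq (hcop z hz) (by rw [(hS z hz).1, Int.natAbs_dvd])

theorem exists_isCoprime_eq_gcd_mul {z : ℤ√D} (hz : z.norm ≠ 0) :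
    ∃ q : ℤ√D, z = (z.re.gcd z.im : ℤ) * q ∧ IsCoprime q.re q.im ∧
      z.norm = (z.re.gcd z.im : ℤ) ^ 2 * q.norm ∧
      q.re.natAbs ≤ z.re.natAbs ∧ q.im.natAbs ≤ z.im.natAbs := by
  have hgcd : 0 < z.re.gcd z.im := Int.gcd_pos_iff.mpr <| by
    by_contra! h
    exact hz (by rw [Zsqrtd.norm_def, h.1, h.2]; ring)
  obtain ⟨q, hq, hcop⟩ := Zsqrtd.exists_coprime_of_gcd_pos hgcd
  have hle {x y : ℤ} (h : y = z.re.gcd z.im * x) : x.natAbs ≤ y.natAbs := by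
    rw [h, Int.natAbs_mul, Int.natAbs_natCast]
    exact Nat.le_mul_of_pos_left _ hgcd
  refine ⟨q, hq, hcop, ?_, hle ?_, hle ?_⟩
  · conv_lhs => rw [hq, Zsqrtd.norm_mul, Zsqrtd.norm_intCast, ← sq]
  · conv_lhs => rw [hq, Zsqrtd.re_smul]
  · conv_lhs => rw [hq, Zsqrtd.im_smul]

theorem card_le_of_norm_eq_of_gcd_eq (hD : D ≠ 0) {N : ℤ} (hN : N ≠ 0) {B g : ℕ} {S : Finset (ℤ√D)}
    (hS : ∀ z ∈ S, z.norm = N ∧ z.re.natAbs ≤ B ∧ z.im.natAbs ≤ B)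
    (hgcd : ∀ z ∈ S, z.re.gcd z.im = g) :
    S.card ≤ 9 * (Nat.log 2 (2 * B ^ 2) + 1) * (4 * D.natAbs * N.natAbs.divisors.card) := by
  classical
  rcases S.eq_empty_or_nonempty with rfl | ⟨w, hw⟩
  · exact Nat.zero_le _
  have hprim (z : S) : ∃ q : ℤ√D, (z : ℤ√D) = (g : ℤ) * q ∧ IsCoprime q.re q.im ∧
      N = (g : ℤ) ^ 2 * q.norm ∧ q.re.natAbs ≤ B ∧ q.im.natAbs ≤ B := by
    obtain ⟨hznorm, hzre, hzim⟩ := hS z z.2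
    obtain ⟨q, hzq, hcop, hnorm, hre, him⟩ := exists_isCoprime_eq_gcd_mul (hznorm ▸ hN)
    rw [hgcd z z.2] at hzq hnorm
    exact ⟨q, hzq, hcop, hznorm ▸ hnorm, hre.trans hzre, him.trans hzim⟩
  choose q hq hcop hnorm hbound using hprim
  have hinj : Function.Injective q := fun z z' h => Subtype.ext <| by rw [hq z, hq z', h]
  set M : ℤ := (q ⟨w, hw⟩).norm
  have hNM : N = (g : ℤ) ^ 2 * M := hnorm ⟨w, hw⟩
  have hM : M ≠ 0 := right_ne_zero_of_mul (hNM ▸ hN)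
  have hM_eq (z : S) : (q z).norm = M :=
    mul_left_cancel₀ (left_ne_zero_of_mul (hNM ▸ hN)) ((hnorm z).symm.trans hNM)
  rw [← S.card_attach, ← Finset.card_image_of_injective _ hinj]
  refine (card_le_of_norm_eq_of_isCoprime (B := B) hD hM ?_ ?_).trans ?_
  · simp only [Finset.forall_mem_image]
    exact fun z _ => ⟨hM_eq z, hbound z⟩
  · simp only [Finset.forall_mem_image]
    exact fun z _ => hcop z
  · gcongr
    exact Int.natAbs_dvd_natAbs.mpr ⟨_, hNM.trans (mul_comm _ _)⟩

theorem card_le_of_norm_eq (hD : D ≠ 0) {N : ℤ} (hN : N ≠ 0) {B : ℕ} {S : Finset (ℤ√D)}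
    (hS : ∀ z ∈ S, z.norm = N ∧ z.re.natAbs ≤ B ∧ z.im.natAbs ≤ B) :
    S.card ≤ 36 * D.natAbs * (Nat.log 2 (2 * B ^ 2) + 1) * N.natAbs.divisors.card ^ 2 := by
  let gcdClass (z : ℤ√D) : ℕ := z.re.gcd z.im
  have hmaps : ∀ z ∈ S, gcdClass z ∈ N.natAbs.divisors := fun z hz => by
    refine Nat.mem_divisors.mpr ⟨Int.natCast_dvd.mp ?_, Int.natAbs_ne_zero.mpr hN⟩
    rw [← (hS z hz).1, Zsqrtd.norm_def]
    exact dvd_sub ((Int.gcd_dvd_left ..).mul_right _) ((Int.gcd_dvd_right ..).mul_left _)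
  have hfiber := Finset.card_le_mul_card_image_of_maps_to hmaps _ fun g _ =>
    card_le_of_norm_eq_of_gcd_eq hD hN (g := g) (fun z hz => hS z (Finset.mem_filter.mp hz).1)
      fun z hz => (Finset.mem_filter.mp hz).2
  exact hfiber.trans_eq (by ring)

end NormForm

section Growth

theorem exists_natCast_add_one_le_mul_pow {q : ℝ} (hq : 1 < q) :
    ∃ K : ℝ, 1 ≤ K ∧ ∀ k : ℕ, (k : ℝ) + 1 ≤ K * q ^ k := by
  have hq0 : 0 < q - 1 := sub_pos.mpr hq
  refine ⟨1 + 1 / (q - 1), le_add_of_nonneg_right (by positivity), fun k => ?_⟩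
  calc (k : ℝ) + 1 ≤ k + 1 + (k * (q - 1) + 1 / (q - 1)) := le_add_of_nonneg_right (by positivity)
    _ = (1 + 1 / (q - 1)) * (1 + k * (q - 1)) := by field_simp; ring
    _ ≤ (1 + 1 / (q - 1)) * q ^ k := by
      gcongr
      exact one_add_mul_sub_le_pow (by linarith) k

theorem exists_log_add_one_le_mul_rpow {δ : ℝ} (hδ : 0 < δ) :
    ∃ K : ℝ, 0 ≤ K ∧ ∀ x : ℕ, x ≠ 0 → (Nat.log 2 x : ℝ) + 1 ≤ K * (x : ℝ) ^ δ := by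
  obtain ⟨K, hK, hpow⟩ := exists_natCast_add_one_le_mul_pow (Real.one_lt_rpow one_lt_two hδ)
  refine ⟨K, by linarith, fun x hx => (hpow _).trans ?_⟩
  rw [Real.rpow_pow_comm zero_le_two]
  gcongr
  exact_mod_cast Nat.pow_log_le_self 2 hx

theorem exists_natCast_add_one_le_ite_mul_rpow {δ : ℝ} (hδ : 0 < δ) :
    ∃ K : ℝ, 1 ≤ K ∧ ∃ P : ℕ, ∀ p k : ℕ, 2 ≤ p →
      (k : ℝ) + 1 ≤ (if p < P then K else 1) * ((p : ℝ) ^ k) ^ δ := by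
  obtain ⟨K, hK, hpow⟩ := exists_natCast_add_one_le_mul_pow (Real.one_lt_rpow one_lt_two hδ)
  obtain ⟨P, hP⟩ := exists_nat_ge ((2 : ℝ) ^ δ⁻¹)
  refine ⟨K, hK, P, fun p k hp => ?_⟩
  rw [← Real.rpow_pow_comm p.cast_nonneg]
  split_ifs with hlt
  · refine (hpow k).trans ?_
    gcongr
    exact_mod_cast hp
  · have htwo : (2 : ℝ) ≤ (p : ℝ) ^ δ := by
      rw [← Real.rpow_inv_le_iff_of_pos zero_le_two p.cast_nonneg hδ]
      exact hP.trans (by exact_mod_cast not_lt.mp hlt)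
    calc (k : ℝ) + 1 ≤ 2 ^ k := by exact_mod_cast Nat.lt_two_pow_self
      _ ≤ 1 * ((p : ℝ) ^ δ) ^ k := by rw [one_mul]; gcongr

theorem exists_card_divisors_le_mul_rpow {δ : ℝ} (hδ : 0 < δ) :
    ∃ K : ℝ, 0 ≤ K ∧ ∀ x : ℕ, x ≠ 0 → (x.divisors.card : ℝ) ≤ K * (x : ℝ) ^ δ := by
  obtain ⟨K, hK, P, hlocal⟩ := exists_natCast_add_one_le_ite_mul_rpow hδ
  refine ⟨K ^ P, by positivity, fun x hx => ?_⟩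
  have hprod : ∏ p ∈ x.primeFactors, ((p : ℝ) ^ x.factorization p) ^ δ = (x : ℝ) ^ δ := by
    rw [Real.finsetProd_rpow _ _ fun _ _ => by positivity]
    conv_rhs => rw [← Nat.prod_factorization_pow_eq_self hx]
    simp only [Finsupp.prod, Nat.support_factorization, Nat.cast_prod, Nat.cast_pow]
  have hsmall : (x.primeFactors.filter (· < P)).card ≤ P := by
    refine (Finset.card_le_card fun p hp => ?_).trans (Finset.card_range P).le
    exact Finset.mem_range.mpr (Finset.mem_filter.mp hp).2
  calc (x.divisors.card : ℝ) = ∏ p ∈ x.primeFactors, ((x.factorization p : ℝ) + 1) := by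
        rw [Nat.card_divisors hx]; push_cast; rfl
    _ ≤ ∏ p ∈ x.primeFactors, (if p < P then K else 1) * ((p : ℝ) ^ x.factorization p) ^ δ :=
        Finset.prod_le_prod (fun _ _ => by positivity) fun p hp =>
          hlocal p _ (Nat.prime_of_mem_primeFactors hp).two_le
    _ = K ^ (x.primeFactors.filter (· < P)).card * (x : ℝ) ^ δ := by
        rw [Finset.prod_mul_distrib, hprod, Finset.prod_ite, Finset.prod_const,
          Finset.prod_const_one, mul_one]
    _ ≤ K ^ P * (x : ℝ) ^ δ := by gcongr

end Growth

section SquareValues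

theorem exists_card_le_mul_rpow_of_norm_eq {D : ℤ} (hD : D ≠ 0) {ε : ℝ} (hε : 0 < ε) :
    ∃ C : ℝ, 0 ≤ C ∧ ∀ X : ℝ, 1 ≤ X → ∀ N : ℤ, N ≠ 0 → |(N : ℝ)| ≤ X → ∀ S : Finset (ℤ√D),
      (∀ z ∈ S, z.norm = N ∧ |(z.re : ℝ)| ≤ X ∧ |(z.im : ℝ)| ≤ X) → (S.card : ℝ) ≤ C * X ^ ε := by
  obtain ⟨K, hK, hlog⟩ := exists_log_add_one_le_mul_rpow (show 0 < ε / 4 by positivity)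
  obtain ⟨L, hL, hdiv⟩ := exists_card_divisors_le_mul_rpow (show 0 < ε / 4 by positivity)
  refine ⟨36 * |(D : ℝ)| * (K * 2 ^ (ε / 4)) * L ^ 2, by positivity,
    fun X hX N hN hNX S hS => ?_⟩
  have hX0 : 0 ≤ X := by linarith
  have hfloor {x : ℤ} (hx : |(x : ℝ)| ≤ X) : x.natAbs ≤ ⌊X⌋₊ :=
    Nat.le_floor (by rwa [Nat.cast_natAbs, Int.cast_abs])
  have hcard := card_le_of_norm_eq hD hN (B := ⌊X⌋₊) fun z hz =>
    ⟨(hS z hz).1, hfloor (hS z hz).2.1, hfloor (hS z hz).2.2⟩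
  have hlogX : (Nat.log 2 (2 * ⌊X⌋₊ ^ 2) : ℝ) + 1 ≤ K * (2 * X ^ 2) ^ (ε / 4) := by
    refine (hlog _ (by positivity [Nat.floor_pos.mpr hX])).trans ?_
    push_cast
    gcongr
    exact Nat.floor_le hX0
  have hdivX : (N.natAbs.divisors.card : ℝ) ≤ L * X ^ (ε / 4) := by
    refine (hdiv _ (Int.natAbs_ne_zero.mpr hN)).trans ?_
    gcongr
    rwa [Nat.cast_natAbs, Int.cast_abs]
  calc (S.card : ℝ) ≤ 36 * |(D : ℝ)| * (Nat.log 2 (2 * ⌊X⌋₊ ^ 2) + 1) *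
        (N.natAbs.divisors.card : ℝ) ^ 2 := by
        rw [← Int.cast_abs, ← Nat.cast_natAbs]
        exact_mod_cast hcard
    _ ≤ 36 * |(D : ℝ)| * (K * (2 * X ^ 2) ^ (ε / 4)) * (L * X ^ (ε / 4)) ^ 2 := by gcongr
    _ = 36 * |(D : ℝ)| * (K * 2 ^ (ε / 4)) * L ^ 2 * (X ^ (ε / 4)) ^ 4 := by
        rw [Real.mul_rpow zero_le_two (sq_nonneg X), ← Real.rpow_pow_comm hX0]
        ring
    _ = 36 * |(D : ℝ)| * (K * 2 ^ (ε / 4)) * L ^ 2 * X ^ ε := by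
        rw [← Real.rpow_mul_natCast hX0, Nat.cast_ofNat, div_mul_cancel₀ _ four_ne_zero]

theorem exists_norm_eq_of_isSquare {c N x : ℤ} (h : IsSquare (N + c * x ^ 2)) :
    ∃ z : ℤ√c, z.im = x ∧ z.norm = N ∧ |z.re| ≤ |N| + |c| * x ^ 2 := by
  obtain ⟨y, hy⟩ := h
  refine ⟨⟨y, x⟩, rfl, ?_, ?_⟩
  · rw [Zsqrtd.norm_def]
    linear_combination -hy
  · calc |y| ≤ |y| ^ 2 := Int.le_self_sq _
      _ = |N + c * x ^ 2| := by rw [hy, abs_mul, sq]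
      _ ≤ |N| + |c| * x ^ 2 := (abs_add_le _ _).trans_eq (by rw [abs_mul, abs_sq])

theorem exists_card_le_mul_rpow_of_isSquare_add_mul_sq {c : ℤ} (hc : c ≠ 0) {K : ℝ} (hK : 0 ≤ K)
    {ε : ℝ} (hε : 0 < ε) :
    ∃ C : ℝ, 0 ≤ C ∧ ∀ X : ℝ, 1 ≤ X → ∀ N : ℤ, N ≠ 0 → |(N : ℝ)| ≤ K * X ^ 2 →
      ∀ T : Finset ℤ, (∀ x ∈ T, |(x : ℝ)| ≤ X ∧ IsSquare (N + c * x ^ 2)) →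
        (T.card : ℝ) ≤ C * X ^ ε := by
  classical
  obtain ⟨C, hC, hcount⟩ := exists_card_le_mul_rpow_of_norm_eq hc (half_pos hε)
  have hc1 : (1 : ℝ) ≤ |(c : ℝ)| := by exact_mod_cast Int.one_le_abs hc
  refine ⟨C * (K + |(c : ℝ)|) ^ (ε / 2), by positivity, fun X hX N hN hNX T hT => ?_⟩
  have hXsq : X ^ 2 ≤ (K + |(c : ℝ)|) * X ^ 2 :=
    le_mul_of_one_le_left (sq_nonneg X) (by linarith)
  have hXle : X ≤ X ^ 2 := le_self_pow₀ hX two_ne_zero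
  choose z him hnorm hre using fun x : T => exists_norm_eq_of_isSquare (hT x x.2).2
  have hinj : Function.Injective z := fun x x' h => Subtype.ext <| by rw [← him x, h, him x']
  have hre' (x : T) : |((z x).re : ℝ)| ≤ (K + |(c : ℝ)|) * X ^ 2 :=
    calc |((z x).re : ℝ)| ≤ |(N : ℝ)| + |(c : ℝ)| * |(x : ℝ)| ^ 2 := by
          rw [sq_abs]; exact_mod_cast hre x
      _ ≤ K * X ^ 2 + |(c : ℝ)| * X ^ 2 := by gcongr; exact (hT x x.2).1
      _ = (K + |(c : ℝ)|) * X ^ 2 := by ring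
  have hcard := hcount ((K + |(c : ℝ)|) * X ^ 2) ((hX.trans hXle).trans hXsq) N hN
    (hNX.trans (by gcongr; exact le_add_of_nonneg_right (abs_nonneg _))) (T.attach.image z) <| by
      simp only [Finset.forall_mem_image]
      exact fun x _ => ⟨hnorm x, hre' x, him x ▸ (hT x x.2).1.trans (hXle.trans hXsq)⟩
  rw [Finset.card_image_of_injective _ hinj, Finset.card_attach] at hcard
  refine hcard.trans_eq ?_
  rw [Real.mul_rpow (by positivity) (sq_nonneg X), ← Real.rpow_natCast_mul (by linarith),
    Nat.cast_ofNat, mul_div_cancel₀ _ two_ne_zero, mul_assoc]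

theorem card_le_two_of_pow_eq {k : ℕ} (hk : k ≠ 0) {x : ℤ} {S : Finset ℤ}
    (hS : ∀ a ∈ S, a ^ k = x) : S.card ≤ 2 := by
  rcases S.eq_empty_or_nonempty with rfl | ⟨a, ha⟩
  · exact Nat.zero_le _
  refine (Finset.card_le_card (t := {a, -a}) fun a' ha' => ?_).trans Finset.card_le_two
  have habs : |a'| ^ k = |a| ^ k := by rw [← abs_pow, ← abs_pow, hS a' ha', hS a ha]
  rw [Finset.mem_insert, Finset.mem_singleton]
  exact abs_eq_abs.mp ((pow_left_inj₀ (abs_nonneg _) (abs_nonneg _) hk).mp habs)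

theorem exists_card_le_mul_rpow_of_isSquare_add_mul_pow {c : ℤ} (hc : c ≠ 0) {n : ℕ}
    (hn : n ≠ 0) (heven : Even n) {K : ℝ} (hK : 0 ≤ K) {ε : ℝ} (hε : 0 < ε) :
    ∃ C : ℝ, 0 ≤ C ∧ ∀ H : ℝ, 1 ≤ H → ∀ N : ℤ, N ≠ 0 → |(N : ℝ)| ≤ K * H ^ n →
      ∀ S : Finset ℤ, (∀ a ∈ S, |(a : ℝ)| ≤ H ∧ IsSquare (N + c * a ^ n)) →
        (S.card : ℝ) ≤ C * H ^ ε := by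
  classical
  obtain ⟨k, rfl⟩ := heven.exists_two_nsmul
  rw [smul_eq_mul, mul_comm] at hn ⊢
  have hk : k ≠ 0 := left_ne_zero_of_mul hn
  obtain ⟨C, hC, hcount⟩ := exists_card_le_mul_rpow_of_isSquare_add_mul_sq hc hK
    (show 0 < ε / k by positivity)
  refine ⟨2 * C, by positivity, fun H hH N hN hNH S hS => ?_⟩
  simp only [pow_mul] at hNH hS
  have himage := hcount (H ^ k) (one_le_pow₀ hH) N hN hNH (S.image (· ^ k)) <| by
    simp only [Finset.forall_mem_image, Int.cast_pow, abs_pow]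
    exact fun a ha => ⟨pow_le_pow_left₀ (abs_nonneg _) (hS a ha).1 k, (hS a ha).2⟩
  have hcard := Finset.card_le_mul_card_image S (f := (· ^ k)) 2 fun x _ =>
    card_le_two_of_pow_eq hk fun a ha => (Finset.mem_filter.mp ha).2
  rw [← Real.rpow_natCast_mul (by linarith), mul_div_cancel₀ _ (by positivity)] at himage
  calc (S.card : ℝ) ≤ 2 * (S.image (· ^ k)).card := by exact_mod_cast hcard
    _ ≤ 2 * (C * H ^ ε) := by gcongr
    _ = 2 * C * H ^ ε := by ring

theorem card_Icc_neg_floor_le {H : ℝ} (hH : 1 ≤ H) :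
    ((Finset.Icc (-⌊H⌋) ⌊H⌋).card : ℝ) ≤ 3 * H := by
  have hfloor : 0 ≤ ⌊H⌋ := Int.floor_nonneg.mpr (by linarith)
  have hcard : ((Finset.Icc (-⌊H⌋) ⌊H⌋).card : ℤ) = 2 * ⌊H⌋ + 1 := by
    rw [Int.card_Icc, Int.toNat_of_nonneg (by omega)]
    ring
  calc ((Finset.Icc (-⌊H⌋) ⌊H⌋).card : ℝ) = 2 * ⌊H⌋ + 1 := by exact_mod_cast hcard
    _ ≤ 3 * H := by linarith [Int.floor_le H]

theorem mem_Icc_neg_floor_iff {H : ℝ} {x : ℤ} : x ∈ Finset.Icc (-⌊H⌋) ⌊H⌋ ↔ |(x : ℝ)| ≤ H := by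
  rw [Finset.mem_Icc, ← abs_le, Int.le_floor, Int.cast_abs]

theorem finite_setOf_abs_le (H : ℝ) :
    {p : ℤ × ℤ | |(p.1 : ℝ)| ≤ H ∧ |(p.2 : ℝ)| ≤ H}.Finite :=
  (Finset.Icc (-⌊H⌋) ⌊H⌋ ×ˢ Finset.Icc (-⌊H⌋) ⌊H⌋).finite_toSet.subset fun _ hp =>
    Finset.mem_product.mpr ⟨mem_Icc_neg_floor_iff.mpr hp.1, mem_Icc_neg_floor_iff.mpr hp.2⟩

theorem card_le_of_fiber_card_le {H M : ℝ} (hH : 1 ≤ H) {U : Finset (ℤ × ℤ)}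
    (hU : ∀ p ∈ U, |(p.2 : ℝ)| ≤ H)
    (hM : ∀ (b : ℤ) (S : Finset ℤ), (∀ a ∈ S, (a, b) ∈ U) → (S.card : ℝ) ≤ M) :
    (U.card : ℝ) ≤ 3 * H * M := by
  have hM0 : 0 ≤ M := by simpa only [Finset.card_empty, Nat.cast_zero] using hM 0 ∅ (by simp)
  have hfiber (b : ℤ) : ((U.filter fun p => p.2 = b).card : ℝ) ≤ M := by
    have hinj : Set.InjOn Prod.fst (U.filter fun p => p.2 = b : Set (ℤ × ℤ)) := fun p hp q hq h =>
      Prod.ext h ((Finset.mem_filter.mp hp).2.trans (Finset.mem_filter.mp hq).2.symm)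
    rw [← Finset.card_image_of_injOn hinj]
    refine hM b _ (Finset.forall_mem_image.mpr fun p hp => ?_)
    obtain ⟨hpU, rfl⟩ := Finset.mem_filter.mp hp
    exact hpU
  calc (U.card : ℝ) = ∑ b ∈ Finset.Icc (-⌊H⌋) ⌊H⌋, ((U.filter fun p => p.2 = b).card : ℝ) := by
        exact_mod_cast Finset.card_eq_sum_card_fiberwise fun p hp =>
          mem_Icc_neg_floor_iff.mpr (hU p hp)
    _ ≤ (Finset.Icc (-⌊H⌋) ⌊H⌋).card * M := by
        rw [← nsmul_eq_mul]
        exact Finset.sum_le_card_nsmul _ _ _ fun b _ => hfiber b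
    _ ≤ 3 * H * M := by gcongr; exact card_Icc_neg_floor_le hH

theorem exists_card_le_mul_rpow_of_isSquare_binary {A c : ℤ} (hA : A ≠ 0) (hc : c ≠ 0) {r n : ℕ}
    (hn : n ≠ 0) (hrn : r ≤ n) (heven : Even n) {ε : ℝ} (hε : 0 < ε) :
    ∃ C : ℝ, ∀ H : ℝ, 1 ≤ H → ∀ U : Finset (ℤ × ℤ),
      (∀ p ∈ U, |(p.1 : ℝ)| ≤ H ∧ |(p.2 : ℝ)| ≤ H ∧ p.2 ≠ 0 ∧
        IsSquare (A * p.2 ^ r + c * p.1 ^ n)) → (U.card : ℝ) ≤ C * H ^ (1 + ε) := by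
  obtain ⟨C, hC, hcount⟩ := exists_card_le_mul_rpow_of_isSquare_add_mul_pow hc hn heven
    (abs_nonneg (A : ℝ)) hε
  refine ⟨3 * C, fun H hH U hU => ?_⟩
  have hfiber (b : ℤ) (S : Finset ℤ) (hS : ∀ a ∈ S, (a, b) ∈ U) : (S.card : ℝ) ≤ C * H ^ ε := by
    rcases S.eq_empty_or_nonempty with rfl | ⟨a, ha⟩
    · simpa only [Finset.card_empty, Nat.cast_zero] using by positivity
    obtain ⟨-, hbH, hb, -⟩ := hU _ (hS a ha)
    refine hcount H hH (A * b ^ r) (mul_ne_zero hA (pow_ne_zero r hb)) ?_ S fun a ha =>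
      ⟨(hU _ (hS a ha)).1, (hU _ (hS a ha)).2.2.2⟩
    push_cast
    rw [abs_mul, abs_pow]
    gcongr
    exact (pow_le_pow_left₀ (abs_nonneg _) hbH r).trans (pow_le_pow_right₀ hH hrn)
  refine (card_le_of_fiber_card_le hH (fun p hp => (hU p hp).2.1) hfiber).trans_eq ?_
  rw [Real.rpow_add (by linarith), Real.rpow_one]
  ring

end SquareValues

section AlternatingTrinomial

theorem ne_zero_of_irreducible_trinomial {F : Type*} [Field F] {m n : ℕ} (hm : 0 < m) (hmn : m < n)
    {a b : F} (hirr : Irreducible (trinomial 0 m n b a 1)) : b ≠ 0 := by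
  rintro rfl
  have hroot : (trinomial 0 m n 0 a 1).IsRoot 0 := by
    rw [IsRoot, ← coeff_zero_eq_eval_zero, trinomial_trailing_coeff' hm hmn]
  have hdeg := degree_eq_one_of_irreducible_of_root hirr hroot
  have hnat : (trinomial 0 m n 0 a 1).natDegree = 1 := natDegree_eq_of_degree_eq_some hdeg
  rw [trinomial_natDegree hm hmn one_ne_zero] at hnat
  omega

theorem isSquare_of_gal_trinomial_mulEquiv_alternatingGroup {m n : ℕ} (hm : 0 < m) (hmn : m < n)
    (hco : m.Coprime n) (heven : Even n) {a b : ℤ}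
    (hirr : Irreducible (trinomial 0 m n (b : ℚ) a 1))
    (φ : (trinomial 0 m n (b : ℚ) a 1).Gal ≃* alternatingGroup (Fin n)) :
    IsSquare ((-1) ^ (n * (n - 1) / 2) * n ^ n * b ^ (n - m) +
      -((-1) ^ (n * (n - 1) / 2) * m ^ m * (n - m : ℕ) ^ (n - m)) * a ^ n) := by
  have hb : (b : ℚ) ≠ 0 := ne_zero_of_irreducible_trinomial hm hmn hirr
  obtain ⟨j, hj⟩ : Odd m := Nat.Coprime.odd_of_right (hco.coprime_dvd_right heven.two_dvd)
  have hdiscr := isSquare_discr_of_gal_mulEquiv_alternatingGroup (trinomial_monic hm hmn)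
    hirr.separable (trinomial_natDegree hm hmn one_ne_zero) φ
  rw [discr_trinomial hm hmn hco, heven.neg_one_pow, hj, Nat.add_sub_cancel, ← hj] at hdiscr
  rw [← Rat.isSquare_intCast_iff]
  refine (congr_arg IsSquare ?_).mp (hdiscr.div (IsSquare.sq ((b : ℚ) ^ j)))
  push_cast
  rw [← pow_mul, mul_comm j 2, mul_left_comm, mul_div_cancel_left₀ _ (pow_ne_zero _ hb)]
  ring

theorem exists_card_trinomial_le_mul_rpow {m n : ℕ} (hm : 0 < m) (hmn : m < n)
    (hco : m.Coprime n) (heven : Even n) {ε : ℝ} (hε : 0 < ε) :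
    ∃ C : ℝ, ∀ H : ℝ, 1 ≤ H → ∀ U : Finset (ℤ × ℤ),
      (∀ p ∈ U, |(p.1 : ℝ)| ≤ H ∧ |(p.2 : ℝ)| ≤ H ∧
        Irreducible (trinomial 0 m n (p.2 : ℚ) p.1 1) ∧
        Nonempty ((trinomial 0 m n (p.2 : ℚ) p.1 1).Gal ≃* alternatingGroup (Fin n))) →
      (U.card : ℝ) ≤ C * H ^ (1 + ε) := by
  have hn : (n : ℤ) ≠ 0 := by omega
  have hm0 : (m : ℤ) ≠ 0 := by omega
  have hr : ((n - m : ℕ) : ℤ) ≠ 0 := by omega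
  have hsign : (-1 : ℤ) ^ (n * (n - 1) / 2) ≠ 0 := pow_ne_zero _ (by decide)
  obtain ⟨C, hC⟩ := exists_card_le_mul_rpow_of_isSquare_binary
    (mul_ne_zero hsign (pow_ne_zero n hn))
    (neg_ne_zero.mpr (mul_ne_zero (mul_ne_zero hsign (pow_ne_zero m hm0)) (pow_ne_zero _ hr)))
    (by omega) (n.sub_le m) heven hε
  refine ⟨C, fun H hH U hU => hC H hH U fun p hp => ?_⟩
  obtain ⟨hp1, hp2, hirr, ⟨φ⟩⟩ := hU p hp
  exact ⟨hp1, hp2, by exact_mod_cast ne_zero_of_irreducible_trinomial hm hmn hirr,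
    isSquare_of_gal_trinomial_mulEquiv_alternatingGroup hm hmn hco heven hirr φ⟩

end AlternatingTrinomial

theorem count_trinomials_alternating_general (n r : ℕ) (hr : 0 < r) (hrn : r < n)
    (hco : Nat.Coprime n r) (hne : Even n) (ε : ℝ) (hε : 0 < ε) :
    ∃ C : ℝ, ∀ H : ℝ, 1 ≤ H →
      (Set.ncard {p : ℤ × ℤ |
          (|p.1| : ℝ) ≤ H ∧ (|p.2| : ℝ) ≤ H ∧
          Irreducible (X ^ n + Polynomial.C ((p.1 : ℚ)) * X ^ (n - r) +
            Polynomial.C ((p.2 : ℚ)) : Polynomial ℚ) ∧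
          Nonempty ((X ^ n + Polynomial.C ((p.1 : ℚ)) * X ^ (n - r) +
              Polynomial.C ((p.2 : ℚ)) : Polynomial ℚ).Gal ≃* alternatingGroup (Fin n))} : ℝ)
        ≤ C * H ^ (1 + ε) := by
  have htrinomial (a b : ℚ) :
      X ^ n + Polynomial.C a * X ^ (n - r) + Polynomial.C b = trinomial 0 (n - r) n b a 1 := by
    rw [trinomial_def, pow_zero, C_1]
    ring
  obtain ⟨C, hC⟩ := exists_card_trinomial_le_mul_rpow (Nat.sub_pos_of_lt hrn)
    (Nat.sub_lt (hr.trans hrn) hr)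
    ((Nat.coprime_self_sub_left hrn.le).mpr hco.symm) hne hε
  refine ⟨C, fun H hH => ?_⟩
  generalize hU : {p : ℤ × ℤ | _} = U
  have hfin : U.Finite := hU ▸ (finite_setOf_abs_le H).subset fun p hp => ⟨hp.1, hp.2.1⟩
  lift U to Finset (ℤ × ℤ) using hfin
  rw [Set.ncard_coe_finset]
  refine hC H hH U fun p hp => ?_
  rw [← Finset.mem_coe, ← hU] at hp
  rw [← htrinomial]
  exact hp

/-- Let `n` and `r` be coprime with `n > r`, `n ≥ 10` and `n` even. Then there are at most
`O_{n,ε}(H^(1+ε))` pairs `(a_r, a_n)` of integers of absolute value at most `H` such that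
`X^n + a_r X^(n-r) + a_n` is irreducible over `ℚ` and the Galois group of its splitting field
over `ℚ` is isomorphic to the alternating group `Aₙ`. -/
theorem count_trinomials_alternating (n r : ℕ) (hr : 0 < r) (hrn : r < n)
    (hco : Nat.Coprime n r) (hn : 10 ≤ n) (hne : Even n) (ε : ℝ) (hε : 0 < ε) :
    ∃ C : ℝ, ∀ H : ℝ, 1 ≤ H →
      (Set.ncard {p : ℤ × ℤ |
          (|p.1| : ℝ) ≤ H ∧ (|p.2| : ℝ) ≤ H ∧
          Irreducible (X ^ n + Polynomial.C ((p.1 : ℚ)) * X ^ (n - r) +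
            Polynomial.C ((p.2 : ℚ)) : Polynomial ℚ) ∧
          Nonempty ((X ^ n + Polynomial.C ((p.1 : ℚ)) * X ^ (n - r) +
              Polynomial.C ((p.2 : ℚ)) : Polynomial ℚ).Gal ≃* alternatingGroup (Fin n))} : ℝ)
        ≤ C * H ^ (1 + ε) :=
  count_trinomials_alternating_general n r hr hrn hco hne ε hε
end

section
/- Let F ∈ ℤ[X_1, X_2] be a polynomial of total degree d ≥ 1 that is irreducible in ℚ[X_1, X_2] but not absolutely irreducible (i.e., F is reducible as a polynomial over an algebraic closure of ℚ, equivalently over ℂ). Then there is a constant C depending only on d such that F has at most C zeros (x_1, x_2) ∈ ℤ² in total. -/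
/-!
Suppose `F` factors as `G * H` over the larger field `L`, with `G` and `H` of smaller degree. A zero
of `F` over `K` is a zero of `G` or of `H`. Applying to the coefficients of `G` a `K`-linear form
`L → K` that does not kill all of them gives a nonzero polynomial `Q` over `K` which vanishes at
every `K`-point where `G` does. As `deg Q < deg F` and `F` is irreducible over `K`, the polynomials
`F` and `Q` are relatively prime, so Bézout bounds their common zeros by `deg F * deg G`; adding the
same bound for `H` yields `(deg F) ^ 2`.

Bézout's inequality for relatively prime `P` and `Q` of degrees `m` and `n` follows from a dimension
count. Let `A t` be the space of polynomials of degree at most `t`, of dimension `(t + 2).choose 2`.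
In `A (m + n + s)` the subspaces `P * A (n + s)` and `Q * A (m + s)` meet in `P * Q * A s`, so their
sum has codimension `m * n`. It lies in the kernel of evaluation at any `s` common zeros, and this
evaluation is onto `K ^ s` because `s` points are separated by polynomials of degree `s`.
-/

section

open MvPolynomial Module

variable {σ R A K L : Type*}

theorem sum_range_succ_multichoose (c t : ℕ) :
    ∑ k ∈ Finset.range (t + 1), c.multichoose k = (t + c).choose c := by
  have hrec : ∑ k ∈ Finset.range (t + 1), c.multichoose k = (c + 1).multichoose t := by
    induction t with
    | zero => simp
    | succ t ih => rw [Finset.sum_range_succ, ih, Nat.multichoose_succ_succ, add_comm]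
  rw [hrec, Nat.multichoose_eq, ← Nat.choose_symm_add]
  congr 1
  lia

theorem ncard_setOf_finsuppSum_le [Fintype σ] (t : ℕ) :
    {n : σ →₀ ℕ | (n.sum fun _ e => e) ≤ t}.ncard =
      (t + Fintype.card σ).choose (Fintype.card σ) := by
  classical
  have hunion : {n : σ →₀ ℕ | (n.sum fun _ e => e) ≤ t} =
      (Finset.range (t + 1)).biUnion (Finset.univ : Finset σ).finsuppAntidiag := by
    ext n
    simp [Finsupp.sum_fintype, Order.lt_add_one_iff]
  rw [hunion, Set.ncard_coe_finset, Finset.card_biUnion]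
  · simp only [Finset.card_finsuppAntidiag_nat_eq_multichoose, Finset.card_univ,
      sum_range_succ_multichoose]
  · intro i _ j _ hij
    refine Finset.disjoint_left.2 fun n hi hj => hij ?_
    rw [Finset.mem_finsuppAntidiag] at hi hj
    exact hi.1.symm.trans hj.1

theorem finrank_restrictTotalDegree [Fintype σ] [CommRing R] [Nontrivial R] (t : ℕ) :
    finrank R (restrictTotalDegree σ R t) = (t + Fintype.card σ).choose (Fintype.card σ) := by
  rw [← ncard_setOf_finsuppSum_le]
  exact finrank_eq_nat_card_basis (basisRestrictSupport R _)

theorem finrank_map_mulLeft [CommRing R] [Ring A] [IsDomain A] [Algebra R A] {a : A} (ha : a ≠ 0)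
    (W : Submodule R A) : finrank R (W.map (LinearMap.mulLeft R a)) = finrank R W :=
  (Submodule.equivMapOfInjective _ (mul_right_injective₀ ha) W).finrank_eq.symm

theorem finrank_add_finrank_map_le {V V' : Type*} [Field K] [AddCommGroup V] [Module K V]
    [AddCommGroup V'] [Module K V'] (f : V →ₗ[K] V') {W A : Submodule K V} [FiniteDimensional K A]
    (hWA : W ≤ A) (hWf : W ≤ f.ker) : finrank K W + finrank K (A.map f) ≤ finrank K A := by
  rw [← (f.domRestrict A).finrank_range_add_finrank_ker, LinearMap.range_domRestrict,
    LinearMap.ker_domRestrict, add_comm]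
  gcongr
  rw [← (Submodule.submoduleOfEquivOfLe hWA).finrank_eq]
  exact Submodule.finrank_mono (Submodule.comap_mono hWf)

theorem map_mulLeft_restrictTotalDegree_le [CommSemiring R] (P : MvPolynomial σ R) (n : ℕ) :
    (restrictTotalDegree σ R n).map (LinearMap.mulLeft R P) ≤
      restrictTotalDegree σ R (P.totalDegree + n) := by
  rintro _ ⟨U, hU, rfl⟩
  rw [SetLike.mem_coe, mem_restrictTotalDegree] at hU
  rw [mem_restrictTotalDegree]
  exact (totalDegree_mul P U).trans (by gcongr)

theorem map_mulLeft_restrictTotalDegree_inf_le [CommRing R] [IsDomain R]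
    [UniqueFactorizationMonoid R] {P Q : MvPolynomial σ R} (hP : P ≠ 0) (hPQ : IsRelPrime P Q)
    (s n : ℕ) :
    (restrictTotalDegree σ R n).map (LinearMap.mulLeft R P) ⊓
        (restrictTotalDegree σ R (P.totalDegree + s)).map (LinearMap.mulLeft R Q) ≤
      (restrictTotalDegree σ R s).map (LinearMap.mulLeft R (P * Q)) := by
  rintro _ ⟨⟨U, -, rfl⟩, V, hV, hUV : Q * V = P * U⟩
  obtain ⟨W, rfl⟩ : P ∣ V := hPQ.dvd_of_dvd_mul_left ⟨U, hUV⟩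
  refine ⟨W, ?_, ?_⟩
  · rw [SetLike.mem_coe, mem_restrictTotalDegree] at hV ⊢
    obtain rfl | hW := eq_or_ne W 0
    · simp
    · rw [totalDegree_mul_of_isDomain hP hW] at hV
      lia
  · simp only [LinearMap.mulLeft_apply, ← hUV]
    ring

/-- Restriction of polynomial functions to a finite set `S` of points of affine space, as a linear
map. It is used to express that the points of `S` impose independent conditions on polynomials of
large degree. -/
noncomputable def evalOn [CommSemiring R] (S : Finset (σ → R)) : MvPolynomial σ R →ₗ[R] S → R :=
  LinearMap.pi fun x => (aeval x.1).toLinearMap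

@[simp]
theorem evalOn_apply [CommSemiring R] (S : Finset (σ → R)) (p : MvPolynomial σ R) (x : S) :
    evalOn S p x = eval x.1 p := rfl

theorem exists_eval_ne_zero_of_notMem [CommRing R] [IsDomain R] {S : Finset (σ → R)} {x : σ → R}
    (hx : x ∉ S) :
    ∃ p : MvPolynomial σ R, p.totalDegree ≤ S.card ∧ eval x p ≠ 0 ∧ ∀ y ∈ S, eval y p = 0 := by
  have hlinear : ∀ y ∈ S, ∃ q : MvPolynomial σ R,
      q.totalDegree ≤ 1 ∧ eval x q ≠ 0 ∧ eval y q = 0 := by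
    intro y hy
    obtain ⟨i, hi⟩ := Function.ne_iff.1 (ne_of_mem_of_not_mem hy hx)
    refine ⟨X i - C (y i), (totalDegree_sub_C_le _ _).trans (totalDegree_X i).le, ?_, by simp⟩
    simpa [sub_eq_zero] using hi.symm
  choose! q hqdeg hqx hqy using hlinear
  refine ⟨∏ y ∈ S, q y, ?_, ?_, fun y hy => ?_⟩
  · calc (∏ y ∈ S, q y).totalDegree ≤ ∑ y ∈ S, (q y).totalDegree := totalDegree_finsetProd _ _
      _ ≤ S.card := by simpa using Finset.sum_le_card_nsmul S _ 1 hqdeg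
  · rw [map_prod]
    exact Finset.prod_ne_zero_iff.2 hqx
  · rw [map_prod]
    exact Finset.prod_eq_zero hy (hqy y hy)

theorem map_evalOn_restrictTotalDegree [Field K] {S : Finset (σ → K)} {t : ℕ} (hS : S.card ≤ t) :
    (restrictTotalDegree σ K t).map (evalOn S) = ⊤ := by
  classical
  rw [eq_top_iff, ← (Pi.basisFun K S).span_eq, Submodule.span_le]
  rintro _ ⟨x, rfl⟩
  obtain ⟨p, hpdeg, hpx, hp⟩ := exists_eval_ne_zero_of_notMem (S.notMem_erase x.1)
  refine ⟨(eval x.1 p)⁻¹ • p, Submodule.smul_mem _ _ ?_, ?_⟩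
  · exact (mem_restrictTotalDegree _ _ _).2 (hpdeg.trans (S.card_erase_le.trans hS))
  · ext y
    obtain rfl | hyx := eq_or_ne y x
    · simp [hpx]
    · simp [hyx, hp y.1 (Finset.mem_erase.2 ⟨Subtype.coe_ne_coe.2 hyx, y.2⟩)]

theorem choose_two_add_choose_two (s m n : ℕ) :
    (m + (n + s) + 2).choose 2 + (s + 2).choose 2 =
      (n + s + 2).choose 2 + (m + s + 2).choose 2 + m * n := by
  qify
  simp only [Nat.cast_choose_two]
  push_cast
  ring

theorem card_common_zeros_le [Field K] {P Q : MvPolynomial (Fin 2) K} (hP : P ≠ 0) (hQ : Q ≠ 0)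
    (hPQ : IsRelPrime P Q) {S : Finset (Fin 2 → K)}
    (hS : ∀ x ∈ S, eval x P = 0 ∧ eval x Q = 0) :
    S.card ≤ P.totalDegree * Q.totalDegree := by
  set m := P.totalDegree
  set n := Q.totalDegree
  set s := S.card
  let A : ℕ → Submodule K (MvPolynomial (Fin 2) K) := restrictTotalDegree (Fin 2) K
  let I := (A (n + s)).map (LinearMap.mulLeft K P)
  let J := (A (m + s)).map (LinearMap.mulLeft K Q)
  have hA : ∀ t, finrank K (A t) = (t + 2).choose 2 := finrank_restrictTotalDegree
  have hI : finrank K I = (n + s + 2).choose 2 := (finrank_map_mulLeft hP _).trans (hA _)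
  have hJ : finrank K J = (m + s + 2).choose 2 := (finrank_map_mulLeft hQ _).trans (hA _)
  have hinf : finrank K ↑(I ⊓ J) ≤ (s + 2).choose 2 := by
    calc finrank K ↑(I ⊓ J) ≤ finrank K ((A s).map (LinearMap.mulLeft K (P * Q))) :=
          Submodule.finrank_mono (map_mulLeft_restrictTotalDegree_inf_le hP hPQ s (n + s))
      _ = (s + 2).choose 2 := (finrank_map_mulLeft (mul_ne_zero hP hQ) _).trans (hA s)
  have hdeg : I ⊔ J ≤ A (m + (n + s)) :=
    sup_le (map_mulLeft_restrictTotalDegree_le P _) <|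
      (map_mulLeft_restrictTotalDegree_le Q _).trans_eq (congrArg A (add_left_comm n m s))
  have hvanish : I ⊔ J ≤ (evalOn S).ker := by
    refine sup_le ?_ ?_ <;> rintro _ ⟨U, -, rfl⟩ <;> ext x <;> simp [hS x x.2]
  have hcount : finrank K ↑(I ⊔ J) + s ≤ (m + (n + s) + 2).choose 2 := by
    have heval : (A (m + (n + s))).map (evalOn S) = ⊤ :=
      map_evalOn_restrictTotalDegree (by lia)
    have hrank := finrank_add_finrank_map_le (evalOn S) hdeg hvanish
    rwa [heval, finrank_top, finrank_fintype_fun_eq_card, Fintype.card_coe, hA] at hrank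
  have hsupinf := Submodule.finrank_sup_add_finrank_inf_eq I J
  have hchoose := choose_two_add_choose_two s m n
  lia

theorem encard_common_zeros_le [Field K] {P Q : MvPolynomial (Fin 2) K} (hP : P ≠ 0) (hQ : Q ≠ 0)
    (hPQ : IsRelPrime P Q) :
    {x | eval x P = 0 ∧ eval x Q = 0}.encard ≤ (P.totalDegree * Q.totalDegree : ℕ) := by
  by_contra! h
  obtain ⟨S, hS, hcard⟩ := Set.exists_subset_encard_eq (Order.add_one_le_of_lt h)
  lift S to Finset (Fin 2 → K) using Set.finite_of_encard_eq_coe hcard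
  rw [Set.encard_coe_eq_coe_finsetCard] at hcard
  have := card_common_zeros_le hP hQ hPQ hS
  norm_cast at hcard
  lia

theorem eval_map_linearMap [CommSemiring R] [CommSemiring A] [Algebra R A] (f : A →ₗ[R] R)
    (x : σ → R) (G : MvPolynomial σ A) :
    eval x (AddMonoidAlgebra.map f.toAddMonoidHom G) = f (eval (algebraMap R A ∘ x) G) := by
  induction G using MvPolynomial.induction_on' with
  | monomial m a =>
    have hmonomial : AddMonoidAlgebra.map f.toAddMonoidHom (monomial m a) = monomial m (f a) :=
      AddMonoidAlgebra.map_single ..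
    have hsmul : eval (algebraMap R A ∘ x) (monomial m a) = (m.prod fun i k => x i ^ k) • a := by
      simp [Algebra.smul_def, eval_monomial, mul_comm, map_finsuppProd]
    rw [hmonomial, hsmul, map_smul, eval_monomial, smul_eq_mul, mul_comm]
  | add p q hp hq =>
    rw [AddMonoidAlgebra.map_add, map_add, map_add, map_add, hp, hq]

theorem exists_ne_zero_totalDegree_le_forall_eval_eq_zero [CommSemiring R] [CommSemiring A]
    [Algebra R A] [Projective R A] {G : MvPolynomial σ A} (hG : G ≠ 0) :
    ∃ Q : MvPolynomial σ R, Q ≠ 0 ∧ Q.totalDegree ≤ G.totalDegree ∧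
      ∀ x, eval (algebraMap R A ∘ x) G = 0 → eval x Q = 0 := by
  obtain ⟨m, hm⟩ := ne_zero_iff.1 hG
  obtain ⟨f, hf⟩ := Projective.exists_dual_ne_zero R hm
  let Q : MvPolynomial σ R := AddMonoidAlgebra.map f.toAddMonoidHom G
  have hcoeff : ∀ k, coeff k Q = f (coeff k G) := fun _ => rfl
  refine ⟨Q, ne_zero_iff.2 ⟨m, hf⟩, ?_, fun x hx => ?_⟩
  · refine Finset.sup_mono fun k hk => ?_
    rw [MvPolynomial.mem_support_iff] at hk ⊢
    exact fun hGk => hk (by rw [hcoeff, hGk, map_zero])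
  · rw [eval_map_linearMap, hx, map_zero]

theorem totalDegree_map_of_injective [CommSemiring R] [CommSemiring A] {φ : R →+* A}
    (hφ : Function.Injective φ) (F : MvPolynomial σ R) :
    (map φ F).totalDegree = F.totalDegree := by
  rw [totalDegree, totalDegree, support_map_of_injective F hφ]

theorem totalDegree_pos_of_not_isUnit [Field K] {G : MvPolynomial σ K} (hG : G ≠ 0)
    (hunit : ¬ IsUnit G) : 0 < G.totalDegree := by
  refine Nat.pos_of_ne_zero fun hdeg => hunit ?_
  obtain ⟨c, rfl⟩ : ∃ c, G = C c := ⟨_, totalDegree_eq_zero_iff_eq_C.1 hdeg⟩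
  exact (IsUnit.mk0 c (by rintro rfl; simp at hG)).map C

theorem encard_zeros_inter_zeros_le [Field K] [CommRing A] [Algebra K A]
    {F : MvPolynomial (Fin 2) K} (hF : Irreducible F) {G : MvPolynomial (Fin 2) A} (hG : G ≠ 0)
    (hdeg : G.totalDegree < F.totalDegree) :
    {x | eval x F = 0 ∧ eval (algebraMap K A ∘ x) G = 0}.encard ≤
      (F.totalDegree * G.totalDegree : ℕ) := by
  obtain ⟨Q, hQ, hQdeg, hQzero⟩ := exists_ne_zero_totalDegree_le_forall_eval_eq_zero (R := K) hG
  have hFQ : IsRelPrime F Q := hF.isRelPrime_iff_not_dvd.2 fun hdvd =>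
    (totalDegree_le_of_dvd_of_isDomain hdvd hQ).not_gt (hQdeg.trans_lt hdeg)
  calc {x | eval x F = 0 ∧ eval (algebraMap K A ∘ x) G = 0}.encard
      ≤ {x | eval x F = 0 ∧ eval x Q = 0}.encard :=
        Set.encard_le_encard fun x hx => ⟨hx.1, hQzero x hx.2⟩
    _ ≤ (F.totalDegree * Q.totalDegree : ℕ) := encard_common_zeros_le hF.ne_zero hQ hFQ
    _ ≤ (F.totalDegree * G.totalDegree : ℕ) := by gcongr

theorem encard_zeros_le_of_not_irreducible_map [Field K] [Field L] [Algebra K L]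
    {F : MvPolynomial (Fin 2) K} (hF : Irreducible F)
    (hFL : ¬ Irreducible (map (algebraMap K L) F)) :
    {x | eval x F = 0}.encard ≤ (F.totalDegree ^ 2 : ℕ) := by
  have hinj : Function.Injective (algebraMap K L) := FaithfulSMul.algebraMap_injective K L
  have hdeg := totalDegree_map_of_injective hinj F
  have hFL0 : map (algebraMap K L) F ≠ 0 := by
    simpa using (map_injective _ hinj).ne hF.ne_zero
  have hunit : ¬ IsUnit (map (algebraMap K L) F) := fun h =>
    (totalDegree_pos_of_not_isUnit hF.ne_zero hF.not_isUnit).ne' <|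
      hdeg.symm.trans (isUnit_iff_totalDegree_of_isReduced.1 h).2
  obtain ⟨G, H, hG, hH, hGH⟩ := (irreducible_or_factor hunit).resolve_left hFL
  rw [hGH] at hFL0 hdeg
  rw [totalDegree_mul_of_isDomain (left_ne_zero_of_mul hFL0) (right_ne_zero_of_mul hFL0)] at hdeg
  have hGpos := totalDegree_pos_of_not_isUnit (left_ne_zero_of_mul hFL0) hG
  have hHpos := totalDegree_pos_of_not_isUnit (right_ne_zero_of_mul hFL0) hH
  have hcover : {x | eval x F = 0} ⊆
      {x | eval x F = 0 ∧ eval (algebraMap K L ∘ x) G = 0} ∪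
        {x | eval x F = 0 ∧ eval (algebraMap K L ∘ x) H = 0} := by
    intro x hx
    have hprod : eval (algebraMap K L ∘ x) G * eval (algebraMap K L ∘ x) H = 0 := by
      rw [← map_mul, ← hGH, ← map_eval, hx, map_zero]
    exact (mul_eq_zero.1 hprod).imp (⟨hx, ·⟩) (⟨hx, ·⟩)
  calc {x | eval x F = 0}.encard
      ≤ _ := (Set.encard_le_encard hcover).trans (Set.encard_union_le _ _)
    _ ≤ (F.totalDegree * G.totalDegree : ℕ) + (F.totalDegree * H.totalDegree : ℕ) :=
        add_le_add (encard_zeros_inter_zeros_le hF (left_ne_zero_of_mul hFL0) (by lia))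
          (encard_zeros_inter_zeros_le hF (right_ne_zero_of_mul hFL0) (by lia))
    _ = (F.totalDegree ^ 2 : ℕ) := by
        rw [← Nat.cast_add, ← mul_add, hdeg, sq]

theorem finitely_many_integral_points_not_absolutely_irreducible_general [CommRing R] [Field K]
    [Field L] [Algebra R K] [FaithfulSMul R K] [Algebra K L] [Algebra R L] [IsScalarTower R K L]
    {F : MvPolynomial (Fin 2) R} (hK : Irreducible (map (algebraMap R K) F))
    (hL : ¬ Irreducible (map (algebraMap R L) F)) :
    {x : R × R | eval (fun i => if i = 0 then x.1 else x.2) F = 0}.encard ≤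
      (F.totalDegree ^ 2 : ℕ) := by
  have hinj := FaithfulSMul.algebraMap_injective R K
  rw [IsScalarTower.algebraMap_eq R K L, ← map_map] at hL
  rw [← totalDegree_map_of_injective hinj F]
  refine le_trans ?_ (encard_zeros_le_of_not_irreducible_map hK hL)
  let toPlane : R × R → Fin 2 → K := fun x => algebraMap R K ∘ fun i => if i = 0 then x.1 else x.2
  refine Set.encard_le_encard_of_injOn (f := toPlane) (fun x hx => ?_) ?_
  · rw [Set.mem_ofPred_eq, ← map_eval, hx, map_zero]
  · refine Function.Injective.injOn (hinj.comp_left.comp fun x y hxy => ?_)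
    exact Prod.ext (congrFun hxy 0) (congrFun hxy 1)

end

/-- A polynomial `F ∈ ℤ[X₁, X₂]` of total degree `d ≥ 1` which is irreducible over `ℚ` but not
absolutely irreducible (i.e. reducible over `ℂ`) has at most `O_d(1)` integer zeros in total. -/
theorem finitely_many_integral_points_not_absolutely_irreducible (d : ℕ) (hd : 1 ≤ d) :
    ∃ C : ℕ, ∀ F : MvPolynomial (Fin 2) ℤ,
      F.totalDegree = d →
      Irreducible (MvPolynomial.map (Int.castRingHom ℚ) F) →
      ¬ Irreducible (MvPolynomial.map (Int.castRingHom ℂ) F) →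
      {x : ℤ × ℤ | MvPolynomial.eval (fun i => if i = 0 then x.1 else x.2) F = 0}.Finite ∧
      Set.ncard {x : ℤ × ℤ |
        MvPolynomial.eval (fun i => if i = 0 then x.1 else x.2) F = 0} ≤ C :=
  ⟨d ^ 2, fun _ hdeg hirr hred => Set.encard_le_coe_iff_finite_ncard_le.1 <|
    hdeg ▸ finitely_many_integral_points_not_absolutely_irreducible_general hirr hred⟩
end

section
/- Let m ≥ 1 be an integer, let α ≥ 1 be a real number, let ε > 0, and let Φ ∈ ℤ[z, t] be irreducible in ℚ[z, t] such that the monomial z^m occurs in Φ with nonzero coefficient. Then there exists a constant C, depending only on the total degree of Φ, on α and on ε, such that for every real H ≥ 2 the number of pairs (z, t) ∈ ℤ² with |z| ≤ H^α, |t| ≤ H and Φ(z, t) = 0 is at most C·H^{1/m+ε}. -/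
/-!
The determinant method of Bombieri and Pila. Let `F` be irreducible and let `(a, b)` be the exponent
of `F` of largest weight `w = α * a + b`. By Hensel's lemma, the integral zeros in a nonsingular
residue class modulo a prime `p` satisfy `z = f(t)` modulo a high power of `p`, for a single
polynomial `f`. Evaluating `N` monomials at `N` of these zeros therefore gives a determinant that is
divisible by `p ^ (N * (N - 1) / 2)`, and it vanishes as soon as `p` exceeds its trivial bound. For
monomials with exponents in a large L-shaped set with corner `(a, b)` this happens for `p` of size
`H ^ (α / w + ε)`. No nonzero multiple of `F` is a combination of such monomials, so the zeros in
the class lie on a second curve that has no component in common with `F = 0`, and their number is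
bounded. There are about `p` classes. If the coefficients of `F` are at most a power of `H`, then so
is `∂F/∂z` at every zero, and boundedly many primes suffice to make every zero at which `∂F/∂z` does
not vanish nonsingular modulo one of them.

If `F` has larger coefficients, then either it has few zeros, or its zeros determine it up to a
constant factor; in that case the linear system they impose on the coefficients of `F` has a small
solution, so that some nonzero constant multiple of `F` has coefficients at most a power of `H`.
-/

open Polynomial Polynomial.Bivariate
open Finset.HasAntidiagonal (mem_antidiagonal)

namespace ResolventCurve

/-! ### Exponents of bivariate polynomials -/

section Exponents

variable {R : Type*} [Semiring R] {P : R[X][Y]} {d : ℕ}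

/-- The pairs `(i, j)` such that the monomial `Y ^ i * X ^ j` occurs in `P`. The exponent of the
outer variable `Y`, which stands for `z`, comes first. -/
noncomputable def exponents (P : R[X][Y]) : Finset (ℕ × ℕ) :=
  (P.support.sigma fun i => (P.coeff i).support).map (Equiv.sigmaEquivProd ℕ ℕ).toEmbedding

lemma mem_exponents {e : ℕ × ℕ} : e ∈ exponents P ↔ (P.coeff e.1).coeff e.2 ≠ 0 := by
  have coeff_ne_zero (h : (P.coeff e.1).coeff e.2 ≠ 0) : P.coeff e.1 ≠ 0 :=
    fun h0 => h (by rw [h0, coeff_zero])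
  simpa [exponents] using coeff_ne_zero

lemma exponents_nonempty (hP : P ≠ 0) : (exponents P).Nonempty := by
  obtain ⟨i, hi⟩ := Polynomial.nonempty_support_iff.2 hP
  obtain ⟨j, hj⟩ := Polynomial.nonempty_support_iff.2 (mem_support_iff.1 hi)
  exact ⟨(i, j), mem_exponents.2 (mem_support_iff.1 hj)⟩

/-- `P` has degree at most `d` in each of its two variables. -/
def BidegreeLE (P : R[X][Y]) (d : ℕ) : Prop :=
  ∀ e ∈ exponents P, e.1 ≤ d ∧ e.2 ≤ d

lemma BidegreeLE.mono {d' : ℕ} (hP : BidegreeLE P d) (h : d ≤ d') : BidegreeLE P d' :=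
  fun e he => ⟨(hP e he).1.trans h, (hP e he).2.trans h⟩

lemma BidegreeLE.natDegree_le (hP : BidegreeLE P d) : P.natDegree ≤ d := by
  rw [natDegree_le_iff_coeff_eq_zero]
  intro i hi
  ext j
  by_contra hij
  exact hi.not_ge (hP (i, j) (mem_exponents.2 hij)).1

lemma BidegreeLE.natDegree_coeff_le (hP : BidegreeLE P d) (i : ℕ) : (P.coeff i).natDegree ≤ d := by
  rw [natDegree_le_iff_coeff_eq_zero]
  intro j hj
  by_contra hij
  exact hj.not_ge (hP (i, j) (mem_exponents.2 hij)).2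

lemma coeff_coeff_derivative (P : R[X][Y]) (i j : ℕ) :
    ((derivative P).coeff i).coeff j = (P.coeff (i + 1)).coeff j * (i + 1) := by
  rw [coeff_derivative, ← Nat.cast_succ, coeff_mul_natCast, Nat.cast_succ]

lemma BidegreeLE.derivative (hP : BidegreeLE P d) : BidegreeLE (derivative P) d := by
  intro e he
  rw [mem_exponents, coeff_coeff_derivative] at he
  obtain ⟨h1, h2⟩ := hP (e.1 + 1, e.2) (mem_exponents.2 (left_ne_zero_of_mul he))
  exact ⟨by omega, h2⟩

lemma natDegree_pos_of_mem_exponents {e : ℕ × ℕ} (he : e ∈ exponents P) (h : 0 < e.1) :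
    0 < P.natDegree :=
  h.trans_le <| le_natDegree_of_ne_zero fun h0 => mem_exponents.1 he (by rw [h0, coeff_zero])

/-- `(a, b)` is the largest exponent of `P` for the weight `α * i + j`, ties being broken by `i`. -/
def IsLeadingExponent (α : ℝ) (P : R[X][Y]) (a b : ℕ) : Prop :=
  (a, b) ∈ exponents P ∧ ∀ e ∈ exponents P,
    α * e.1 + e.2 < α * a + b ∨ α * e.1 + e.2 = α * a + b ∧ e.1 ≤ a

lemma exists_isLeadingExponent (α : ℝ) (hP : P ≠ 0) : ∃ a b, IsLeadingExponent α P a b := by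
  obtain ⟨⟨a, b⟩, hab, hmax⟩ := (exponents P).exists_max_image
    (fun e => toLex (α * (e.1 : ℝ) + e.2, e.1)) (exponents_nonempty hP)
  refine ⟨a, b, hab, fun e he => ?_⟩
  simpa only [Prod.Lex.toLex_le_toLex] using hmax e he

lemma IsLeadingExponent.weight_le {α : ℝ} {a b : ℕ} (h : IsLeadingExponent α P a b) {e : ℕ × ℕ}
    (he : e ∈ exponents P) : α * e.1 + e.2 ≤ α * a + b :=
  (h.2 e he).elim le_of_lt fun h' => h'.1.le

lemma IsLeadingExponent.eq_of_add_eq {α : ℝ} {Q : R[X][Y]} {a b a' b' : ℕ}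
    (hP : IsLeadingExponent α P a b) (hQ : IsLeadingExponent α Q a' b') {e e' : ℕ × ℕ}
    (he : e ∈ exponents P) (he' : e' ∈ exponents Q)
    (h1 : e.1 + e'.1 = a + a') (h2 : e.2 + e'.2 = b + b') : e = (a, b) ∧ e' = (a', b') := by
  have h1' : (e.1 : ℝ) + e'.1 = a + a' := mod_cast h1
  have h2' : (e.2 : ℝ) + e'.2 = b + b' := mod_cast h2
  have hsum : (α * e.1 + e.2) + (α * e'.1 + e'.2) = (α * a + b) + (α * a' + b') := by
    linear_combination α * h1' + h2'
  have hw' := hQ.weight_le he'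
  rcases hP.2 e he with hlt | ⟨hw, hle⟩
  · linarith
  rcases hQ.2 e' he' with hlt' | ⟨-, hle'⟩
  · linarith
  have hfst : e.1 = a := by omega
  have hsnd : e.2 = b := by
    rw [hfst] at hw
    exact_mod_cast add_left_cancel hw
  exact ⟨Prod.ext hfst hsnd, Prod.ext (by simp only; omega) (by simp only; omega)⟩

lemma IsLeadingExponent.coeff_mul {α : ℝ} {Q : R[X][Y]} {a b a' b' : ℕ}
    (hP : IsLeadingExponent α P a b) (hQ : IsLeadingExponent α Q a' b') :
    ((P * Q).coeff (a + a')).coeff (b + b') =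
      (P.coeff a).coeff b * (Q.coeff a').coeff b' := by
  have leading_of_ne_zero {i i' j j' : ℕ} (hi : i + i' = a + a') (hj : j + j' = b + b')
      (h : (P.coeff i).coeff j * (Q.coeff i').coeff j' ≠ 0) :
      (i, i') = (a, a') ∧ (j, j') = (b, b') := by
    obtain ⟨he, he'⟩ := hP.eq_of_add_eq hQ (e := (i, j)) (e' := (i', j'))
      (mem_exponents.2 (left_ne_zero_of_mul h)) (mem_exponents.2 (right_ne_zero_of_mul h)) hi hj
    simp only [Prod.mk.injEq] at he he' ⊢
    tauto
  rw [Polynomial.coeff_mul, finsetSum_coeff, Finset.sum_eq_single (a, a'),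
    Polynomial.coeff_mul, Finset.sum_eq_single (b, b')]
  · rintro ⟨j, j'⟩ hj hne
    by_contra h
    exact hne (leading_of_ne_zero rfl (mem_antidiagonal.1 hj) h).2
  · exact fun h => (h (mem_antidiagonal.2 rfl)).elim
  · rintro ⟨i, i'⟩ hi hne
    rw [Polynomial.coeff_mul]
    refine Finset.sum_eq_zero fun j hj => ?_
    by_contra h
    exact hne (leading_of_ne_zero (mem_antidiagonal.1 hi)
      (mem_antidiagonal.1 hj) h).1
  · exact fun h => (h (mem_antidiagonal.2 rfl)).elim

lemma IsLeadingExponent.add_mem_exponents_mul [NoZeroDivisors R] {α : ℝ} {Q : R[X][Y]}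
    {a b a' b' : ℕ} (hP : IsLeadingExponent α P a b) (hQ : IsLeadingExponent α Q a' b') :
    (a + a', b + b') ∈ exponents (P * Q) := by
  rw [mem_exponents, hP.coeff_mul hQ]
  exact mul_ne_zero (mem_exponents.1 hP.1) (mem_exponents.1 hQ.1)

lemma IsLeadingExponent.not_dvd [NoZeroDivisors R] {α : ℝ} {Q : R[X][Y]} {a b : ℕ}
    (hP : IsLeadingExponent α P a b) (hQ : Q ≠ 0)
    (h : ∀ e ∈ exponents Q, e.1 < a ∨ e.2 < b) : ¬ P ∣ Q := by
  rintro ⟨S, rfl⟩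
  obtain ⟨a', b', hS⟩ := exists_isLeadingExponent α (right_ne_zero_of_mul hQ)
  have := h _ (hP.add_mem_exponents_mul hS)
  omega

lemma exists_eq_mul_C_of_dvd_of_exponents_subset [NoZeroDivisors R] {Q : R[X][Y]} (hQ : Q ≠ 0)
    (hdvd : P ∣ Q) (h : exponents Q ⊆ exponents P) : ∃ q : R, q ≠ 0 ∧ Q = P * C (C q) := by
  obtain ⟨S, rfl⟩ := hdvd
  obtain ⟨a, b, hP⟩ := exists_isLeadingExponent 1 (left_ne_zero_of_mul hQ)
  obtain ⟨a', b', hS⟩ := exists_isLeadingExponent 1 (right_ne_zero_of_mul hQ)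
  have hle := hP.weight_le (h (hP.add_mem_exponents_mul hS))
  push_cast at hle
  have hS_zero : ∀ e ∈ exponents S, e = (0, 0) := by
    intro e he
    have hw := hS.weight_le he
    have : ((e.1 + e.2 : ℕ) : ℝ) ≤ (0 : ℕ) := by push_cast; linarith
    have : e.1 + e.2 ≤ 0 := mod_cast this
    exact Prod.ext (by simp only; omega) (by simp only; omega)
  have hS_eq : S = C (C ((S.coeff 0).coeff 0)) := by
    ext i j
    rcases eq_or_ne (i, j) (0, 0) with h0 | h0
    · obtain ⟨rfl, rfl⟩ := Prod.mk.inj h0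
      simp only [coeff_C_zero]
    · rw [not_not.1 (mt (mem_exponents (e := (i, j))).2 fun hij => h0 (hS_zero _ hij))]
      rw [coeff_C]
      split_ifs with hi
      · rw [coeff_C_of_ne_zero fun hj => h0 (by rw [hi, hj])]
      · exact coeff_zero j
  refine ⟨(S.coeff 0).coeff 0, fun h0 => right_ne_zero_of_mul hQ ?_, by rw [← hS_eq]⟩
  rw [hS_eq, h0, C_0, C_0]

end Exponents

section OfCoeffs

variable {R : Type*} [CommRing R] {E : Finset (ℕ × ℕ)}

/-- The polynomial `∑ c (i, j) * Y ^ i * X ^ j`, the sum being over `(i, j) ∈ E`. -/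
noncomputable def ofCoeffs (E : Finset (ℕ × ℕ)) (c : E → R) : R[X][Y] :=
  ∑ e : E, monomial e.1.1 (monomial e.1.2 (c e))

lemma coeff_coeff_ofCoeffs (c : E → R) (i j : ℕ) :
    ((ofCoeffs E c).coeff i).coeff j = if h : (i, j) ∈ E then c ⟨(i, j), h⟩ else 0 := by
  have coeff_term (e : E) : ((monomial e.1.1 (monomial e.1.2 (c e))).coeff i).coeff j =
      if e.1 = (i, j) then c e else 0 := by
    rw [coeff_monomial]
    simp only [Prod.ext_iff, ite_and]
    split_ifs with hi hj
    · rw [hj, coeff_monomial_same]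
    · exact coeff_monomial_of_ne _ (Ne.symm hj)
    · exact coeff_zero j
  simp only [ofCoeffs, finsetSum_coeff, coeff_term]
  split_ifs with h
  · rw [Finset.sum_eq_single ⟨(i, j), h⟩ (fun e _ he => if_neg fun h' => he (Subtype.ext h'))
      fun h' => absurd (Finset.mem_univ _) h', if_pos rfl]
  · exact Finset.sum_eq_zero fun e _ => if_neg fun (h' : e.1 = (i, j)) => h (h' ▸ e.2)

lemma exponents_ofCoeffs_subset (c : E → R) : exponents (ofCoeffs E c) ⊆ E := by
  intro e he
  rw [mem_exponents, coeff_coeff_ofCoeffs] at he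
  by_contra h
  exact he (dif_neg h)

lemma ofCoeffs_ne_zero {c : E → R} (hc : c ≠ 0) : ofCoeffs E c ≠ 0 := by
  obtain ⟨e, he⟩ := Function.ne_iff.1 hc
  intro h0
  have := coeff_coeff_ofCoeffs c e.1.1 e.1.2
  rw [h0, coeff_zero, coeff_zero, dif_pos e.2] at this
  exact he this.symm

lemma ofCoeffs_exponents (P : R[X][Y]) :
    ofCoeffs (exponents P) (fun e => (P.coeff e.1.1).coeff e.1.2) = P := by
  ext i j
  rw [coeff_coeff_ofCoeffs]
  split_ifs with h
  · rfl
  · exact (not_not.1 (mt (mem_exponents (e := (i, j))).2 h)).symm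

/-- The generalized Vandermonde matrix whose rows are the values of the monomials
`z ^ i * t ^ j`, `(i, j) ∈ E`, at the points `q k = (z, t)`. -/
def monomialMatrix {T : Type*} (q : T → R × R) (E : Finset (ℕ × ℕ)) : Matrix T E R :=
  Matrix.of fun k e => (q k).1 ^ e.1.1 * (q k).2 ^ e.1.2

lemma monomialMatrix_mulVec {T : Type*} (q : T → R × R) (c : E → R) (k : T) :
    (monomialMatrix q E).mulVec c k = (ofCoeffs E c).evalEval (q k).2 (q k).1 := by
  rw [ofCoeffs, evalEval_finsetSum]
  refine Finset.sum_congr rfl fun e _ => ?_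
  simp only [monomialMatrix, Matrix.of_apply, evalEval, eval_monomial, eval_mul, eval_pow, eval_C]
  ring

end OfCoeffs

section ToRat

/-- The polynomial `F`, regarded as a polynomial over `ℚ`. -/
noncomputable def toRat (F : ℤ[X][Y]) : ℚ[X][Y] := F.map (mapRingHom (Int.castRingHom ℚ))

lemma exponents_toRat (F : ℤ[X][Y]) : exponents (toRat F) = exponents F := by
  ext e
  simp only [mem_exponents, toRat, coeff_map, coe_mapRingHom, eq_intCast, Int.cast_ne_zero]

lemma toRat_ne_zero {F : ℤ[X][Y]} (hF : F ≠ 0) : toRat F ≠ 0 := by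
  obtain ⟨e, he⟩ := exponents_nonempty hF
  rw [← exponents_toRat, mem_exponents] at he
  exact fun h0 => he (by rw [h0, coeff_zero, coeff_zero])

lemma evalEval_toRat (F : ℤ[X][Y]) (t z : ℤ) :
    (toRat F).evalEval (t : ℚ) (z : ℚ) = F.evalEval t z :=
  map_mapRingHom_evalEval (Int.castRingHom ℚ) F t z

lemma derivative_toRat (F : ℤ[X][Y]) : derivative (toRat F) = toRat (derivative F) :=
  derivative_map F _

lemma BidegreeLE.toRat {F : ℤ[X][Y]} {d : ℕ} (hF : BidegreeLE F d) : BidegreeLE (toRat F) d := by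
  rwa [BidegreeLE, exponents_toRat]

end ToRat

/-! ### Common zeros -/

section CommonZeros

variable {k : Type*} [Field k] {P Q : k[X][Y]} {d : ℕ}

lemma card_le_natDegree_mul_card_image_snd [DecidableEq k] (S : Finset (k × k))
    (hS : ∀ p ∈ S, P.evalEval p.2 p.1 = 0) (hfiber : ∀ p ∈ S, P.map (evalRingHom p.2) ≠ 0) :
    S.card ≤ P.natDegree * (S.image Prod.snd).card := by
  refine Finset.card_le_mul_card_image S _ fun t ht => ?_
  obtain ⟨p₀, hp₀, rfl⟩ := Finset.mem_image.1 ht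
  have hinj : Set.InjOn Prod.fst (S.filter fun p => p.2 = p₀.2 : Set (k × k)) := by
    intro p hp q hq hpq
    exact Prod.ext hpq ((Finset.mem_filter.1 hp).2.trans (Finset.mem_filter.1 hq).2.symm)
  have hroots : (S.filter fun p => p.2 = p₀.2).image Prod.fst ⊆
      (P.map (evalRingHom p₀.2)).roots.toFinset := by
    intro z hz
    obtain ⟨p, hp, rfl⟩ := Finset.mem_image.1 hz
    obtain ⟨hpS, hp₂⟩ := Finset.mem_filter.1 hp
    rw [Multiset.mem_toFinset, mem_roots (hfiber p₀ hp₀), IsRoot, map_evalRingHom_eval, ← hp₂]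
    exact hS p hpS
  calc (S.filter fun p => p.2 = p₀.2).card
      = ((S.filter fun p => p.2 = p₀.2).image Prod.fst).card :=
        (Finset.card_image_of_injOn hinj).symm
    _ ≤ (P.map (evalRingHom p₀.2)).roots.card :=
        (Finset.card_le_card hroots).trans (Multiset.toFinset_card_le _)
    _ ≤ P.natDegree := (card_roots' _).trans natDegree_map_le

lemma resultant_ne_zero_of_not_dvd (hP : Irreducible P) (hdeg : 0 < P.natDegree)
    (hPQ : ¬ P ∣ Q) : resultant P Q ≠ 0 := by
  have hprim : P.IsPrimitive := hP.isPrimitive hdeg.ne'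
  set φ := algebraMap k[X] (RatFunc k)
  have hφ : Function.Injective φ := IsFractionRing.injective _ _
  intro h0
  have hres : resultant (P.map φ) (Q.map φ) = 0 := by
    rw [natDegree_map_eq_of_injective hφ, natDegree_map_eq_of_injective hφ, resultant_map_map,
      h0, map_zero]
  have hdvd : P.map φ ∣ Q.map φ :=
    ((hprim.irreducible_iff_irreducible_map_fraction_map.1 hP).isCoprime_or_dvd _).resolve_left
      (resultant_eq_zero_iff.1 hres).2
  exact hPQ (hprim.dvd_of_fraction_map_dvd_fraction_map hdvd)

lemma natDegree_resultant_le (hP : ∀ i, (P.coeff i).natDegree ≤ d)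
    (hQ : ∀ i, (Q.coeff i).natDegree ≤ d) :
    (resultant P Q).natDegree ≤ (P.natDegree + Q.natDegree) * d := by
  have hentry (i j) : (sylvester P Q P.natDegree Q.natDegree i j).natDegree ≤ d := by
    simp only [sylvester, Matrix.of_apply]
    induction j using Fin.addCases with
    | left j => rw [Fin.addCases_left]; split_ifs <;> simp [hQ]
    | right j => rw [Fin.addCases_right]; split_ifs <;> simp [hP]
  rw [resultant, Matrix.det_apply]
  refine natDegree_sum_le_of_forall_le _ _ fun σ _ => (natDegree_smul_le _ _).trans ?_
  calc (∏ i, sylvester P Q P.natDegree Q.natDegree (σ i) i).natDegree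
      ≤ ∑ i, (sylvester P Q P.natDegree Q.natDegree (σ i) i).natDegree := natDegree_prod_le _ _
    _ ≤ ∑ _i : Fin (P.natDegree + Q.natDegree), d := Finset.sum_le_sum fun i _ => hentry _ _
    _ = (P.natDegree + Q.natDegree) * d := by
        rw [Finset.sum_const, Finset.card_univ, Fintype.card_fin, smul_eq_mul]

lemma isRoot_resultant_of_evalEval_eq_zero (hdeg : P.natDegree ≠ 0) {z t : k}
    (hP : P.evalEval t z = 0) (hQ : Q.evalEval t z = 0) : (resultant P Q).IsRoot t := by
  obtain ⟨A, B, -, -, hAB⟩ :=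
    exists_mul_add_mul_eq_C_resultant P Q le_rfl le_rfl (Or.inl hdeg)
  have h := congrArg (evalEval t z) hAB
  rwa [evalEval_add, evalEval_mul, evalEval_mul, evalEval_C, hP, hQ, zero_mul, zero_mul, add_zero,
    eq_comm] at h

lemma map_evalRingHom_ne_zero_of_isPrimitive (hP : P.IsPrimitive) (t : k) :
    P.map (evalRingHom t) ≠ 0 := by
  intro h0
  have hdvd : C (X - C t) ∣ P := by
    rw [C_dvd_iff_dvd_coeff]
    intro i
    rw [dvd_iff_isRoot, IsRoot, ← coe_evalRingHom, ← coeff_map, h0, coeff_zero]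
  exact not_isUnit_X_sub_C t (hP _ hdvd)

lemma card_common_zeros_le (hP : Irreducible P) (hdeg : 0 < P.natDegree) (hPQ : ¬ P ∣ Q)
    (hPd : BidegreeLE P d) (hQd : BidegreeLE Q d) (S : Finset (k × k))
    (hSP : ∀ p ∈ S, P.evalEval p.2 p.1 = 0) (hSQ : ∀ p ∈ S, Q.evalEval p.2 p.1 = 0) :
    S.card ≤ 2 * d ^ 3 := by
  classical
  have hroots : S.image Prod.snd ⊆ (resultant P Q).roots.toFinset := by
    intro t ht
    obtain ⟨p, hp, rfl⟩ := Finset.mem_image.1 ht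
    rw [Multiset.mem_toFinset, mem_roots (resultant_ne_zero_of_not_dvd hP hdeg hPQ)]
    exact isRoot_resultant_of_evalEval_eq_zero hdeg.ne' (hSP p hp) (hSQ p hp)
  have himage : (S.image Prod.snd).card ≤ (d + d) * d :=
    calc (S.image Prod.snd).card ≤ (resultant P Q).roots.card :=
          (Finset.card_le_card hroots).trans (Multiset.toFinset_card_le _)
      _ ≤ (P.natDegree + Q.natDegree) * d :=
          (card_roots' _).trans (natDegree_resultant_le hPd.natDegree_coeff_le
            hQd.natDegree_coeff_le)
      _ ≤ (d + d) * d :=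
          Nat.mul_le_mul_right _ (Nat.add_le_add hPd.natDegree_le hQd.natDegree_le)
  calc S.card ≤ P.natDegree * (S.image Prod.snd).card :=
        card_le_natDegree_mul_card_image_snd S hSP fun p _ =>
          map_evalRingHom_ne_zero_of_isPrimitive (hP.isPrimitive hdeg.ne') p.2
    _ ≤ d * ((d + d) * d) := Nat.mul_le_mul hPd.natDegree_le himage
    _ = 2 * d ^ 3 := by ring

lemma card_integral_common_zeros_le {F G : ℤ[X][Y]} (hF : Irreducible (toRat F))
    (hdeg : 0 < (toRat F).natDegree) (hFG : ¬ toRat F ∣ toRat G) (hFd : BidegreeLE F d)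
    (hGd : BidegreeLE G d) (T : Finset (ℤ × ℤ)) (hTF : ∀ q ∈ T, F.evalEval q.2 q.1 = 0)
    (hTG : ∀ q ∈ T, G.evalEval q.2 q.1 = 0) : T.card ≤ 2 * d ^ 3 := by
  have hinj : Function.Injective (Prod.map Int.cast Int.cast : ℤ × ℤ → ℚ × ℚ) :=
    Int.cast_injective.prodMap Int.cast_injective
  rw [← Finset.card_map ⟨_, hinj⟩]
  refine card_common_zeros_le hF hdeg hFG hFd.toRat hGd.toRat _ ?_ ?_
  · rw [Finset.forall_mem_map]
    exact fun q hq => (evalEval_toRat F _ _).trans (by rw [hTF q hq, Int.cast_zero])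
  · rw [Finset.forall_mem_map]
    exact fun q hq => (evalEval_toRat G _ _).trans (by rw [hTG q hq, Int.cast_zero])

end CommonZeros

/-! ### Approximation of the points of a nonsingular residue class -/

section Hensel

variable {R : Type*} [CommRing R]

lemma dvd_evalEval_sub_evalEval (F : R[X][Y]) {p t t' z z' : R} (ht : p ∣ t - t')
    (hz : p ∣ z - z') : p ∣ F.evalEval t z - F.evalEval t' z' := by
  have hz' : p ∣ F.evalEval t z - F.evalEval t z' := by
    rw [← map_evalRingHom_eval, ← map_evalRingHom_eval]
    exact hz.trans (sub_dvd_eval_sub _ _ _)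
  have ht' : p ∣ F.evalEval t z' - F.evalEval t' z' := ht.trans (sub_dvd_eval_sub _ _ _)
  simpa only [sub_add_sub_cancel] using dvd_add hz' ht'

lemma evalEval_eval (F : R[X][Y]) (f : R[X]) (t : R) :
    F.evalEval t (f.eval t) = (F.eval f).eval t := by
  rw [← eval₂_evalRingHom, ← coe_evalRingHom, eval₂_at_apply]

lemma pow_succ_dvd_newton_step (P : R[X]) {p x z c : R} (M : ℕ) (hz : P.eval z = 0)
    (hc : p ∣ 1 - c * (derivative P).eval x) (hx : p ^ (M + 1) ∣ z - x) :
    p ^ (M + 2) ∣ z - (x - c * P.eval x) := by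
  obtain ⟨w, hw⟩ := hc
  obtain ⟨y, hy⟩ := hx
  obtain ⟨k, hk⟩ := binomExpansion P x (z - x)
  rw [add_sub_cancel, hz] at hk
  have hstep : z - (x - c * P.eval x) =
      (z - x) * (1 - c * (derivative P).eval x) - c * k * (z - x) ^ 2 := by
    linear_combination -c * hk
  refine ⟨y * w - c * k * y ^ 2 * p ^ M, ?_⟩
  rw [hstep, hw, hy]
  ring

lemma exists_polynomial_approx_of_nonsingular (F : R[X][Y]) {p z₁ t₁ c : R}
    (hc : p ∣ 1 - c * (derivative F).evalEval t₁ z₁) (M : ℕ) :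
    ∃ f : R[X], ∀ z t : R, p ∣ z - z₁ → p ∣ t - t₁ → F.evalEval t z = 0 →
      p ^ (M + 1) ∣ z - f.eval t := by
  induction M with
  | zero => exact ⟨C z₁, fun z t hz _ _ => by rwa [eval_C, zero_add, pow_one]⟩
  | succ M ih =>
    obtain ⟨f, hf⟩ := ih
    refine ⟨f - C c * F.eval f, fun z t hz ht hF => ?_⟩
    have hx := hf z t hz ht hF
    have hxz₁ : p ∣ f.eval t - z₁ := by
      simpa only [sub_sub_sub_cancel_left] using
        dvd_sub hz ((dvd_pow_self p M.succ_ne_zero).trans hx)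
    have hcx : p ∣ 1 - c * (derivative F).evalEval t (f.eval t) := by
      have h := (dvd_evalEval_sub_evalEval (derivative F) ht hxz₁).mul_left c
      convert dvd_sub hc h using 1
      ring
    rw [eval_sub, eval_mul, eval_C, ← evalEval_eval, ← map_evalRingHom_eval]
    refine pow_succ_dvd_newton_step _ M ?_ ?_ hx
    · rwa [map_evalRingHom_eval]
    · rwa [derivative_map, map_evalRingHom_eval]

end Hensel

/-! ### Determinants -/

section Determinant

variable {R : Type*} [CommRing R] {p : R}

lemma pow_choose_two_dvd_det_vandermonde {n : ℕ} (u : Fin n → R) (hu : ∀ i j, p ∣ u i - u j) :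
    p ^ n.choose 2 ∣ (Matrix.vandermonde u).det := by
  have hexp : ∑ i : Fin n, (n - 1 - (i : ℕ)) = n.choose 2 := by
    rw [Fin.sum_univ_eq_sum_range (fun i => n - 1 - i), Finset.sum_range_reflect (fun i => i) n,
      Finset.sum_range_id, Nat.choose_two_right]
  rw [Matrix.det_vandermonde, ← hexp, ← Finset.prod_pow_eq_pow_sum]
  refine Finset.prod_dvd_prod_of_dvd _ _ fun i _ => ?_
  rw [← Fin.card_Ioi, ← Finset.prod_const]
  exact Finset.prod_dvd_prod_of_dvd _ _ fun j _ => hu j i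

/-- Reducing the polynomials modulo `∏ (X - u k)` factors the matrix through the Vandermonde
matrix of `u`. -/
lemma det_vandermonde_dvd_det_eval {n : ℕ} (u : Fin n → R) (h : Fin n → R[X]) :
    (Matrix.vandermonde u).det ∣ (Matrix.of fun k e => (h e).eval (u k)).det := by
  nontriviality R
  set W : R[X] := ∏ k, (X - C (u k)) with hW
  have hmonic : W.Monic := monic_prod_X_sub_C _ _
  have hdeg : W.natDegree = n := by
    rw [hW, natDegree_finsetProd_X_sub_C_eq_card, Finset.card_univ, Fintype.card_fin]
  have hroot (k : Fin n) : W.eval (u k) = 0 := by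
    rw [hW, eval_prod]
    exact Finset.prod_eq_zero (Finset.mem_univ k) (by rw [eval_sub, eval_X, eval_C, sub_self])
  have hfactor : (Matrix.of fun k e => (h e).eval (u k)) =
      Matrix.vandermonde u * Matrix.of fun (j e : Fin n) => (h e %ₘ W).coeff j := by
    ext k e
    have heval : (h e %ₘ W).eval (u k) = (h e).eval (u k) :=
      eval₂_modByMonic_eq_self_of_root (hroot k)
    have hlt : (h e %ₘ W).natDegree < n := by
      rw [← hdeg]
      refine natDegree_modByMonic_lt _ hmonic fun h1 => ?_
      rw [h1, natDegree_one] at hdeg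
      exact (hdeg ▸ k).elim0
    rw [Matrix.of_apply, ← heval, eval_eq_sum_range' hlt, Matrix.mul_apply,
      ← Fin.sum_univ_eq_sum_range (fun j => (h e %ₘ W).coeff j * u k ^ j)]
    exact Finset.sum_congr rfl fun j _ => mul_comm _ _
  rw [hfactor, Matrix.det_mul]
  exact dvd_mul_right _ _

variable {ι : Type*} [Fintype ι] [DecidableEq ι]

lemma dvd_det_sub_det {q : R} {A B : Matrix ι ι R} (h : ∀ k e, q ∣ A k e - B k e) :
    q ∣ A.det - B.det := by
  rw [← Ideal.mem_span_singleton, ← Ideal.Quotient.mk_eq_mk_iff_sub_mem, RingHom.map_det,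
    RingHom.map_det]
  congr 1
  ext k e
  exact (Ideal.Quotient.mk_eq_mk_iff_sub_mem _ _).2 (Ideal.mem_span_singleton.2 (h k e))

lemma pow_choose_two_dvd_det {u : ι → R} (hu : ∀ i j, p ∣ u i - u j) (h : ι → R[X])
    {A : Matrix ι ι R}
    (hA : ∀ k e, p ^ (Fintype.card ι).choose 2 ∣ A k e - (h e).eval (u k)) :
    p ^ (Fintype.card ι).choose 2 ∣ A.det := by
  set σ := (Fintype.equivFin ι).symm
  have hvalues : p ^ (Fintype.card ι).choose 2 ∣
      (Matrix.of fun k e => (h e).eval (u k)).det := by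
    rw [← Matrix.det_submatrix_equiv_self σ]
    exact (pow_choose_two_dvd_det_vandermonde (u ∘ σ) fun i j => hu _ _).trans
      (det_vandermonde_dvd_det_eval (u ∘ σ) (h ∘ σ))
  exact (dvd_iff_dvd_of_dvd_sub (dvd_det_sub_det hA)).2 hvalues

lemma abs_det_le (A : Matrix ι ι ℤ) {B : ι → ℝ} (hA : ∀ k e, |(A k e : ℝ)| ≤ B e) :
    |(A.det : ℝ)| ≤ (Fintype.card ι).factorial * ∏ e, B e := by
  have hterm (σ : Equiv.Perm ι) :
      |((Equiv.Perm.sign σ : ℤ) : ℝ) * ∏ i, (A (σ i) i : ℝ)| ≤ ∏ e, B e := by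
    rw [abs_mul, abs_unit_intCast, one_mul, Finset.abs_prod]
    exact Finset.prod_le_prod (fun _ _ => abs_nonneg _) fun e _ => hA _ _
  rw [Matrix.det_apply']
  push_cast
  calc |∑ σ : Equiv.Perm ι, ((Equiv.Perm.sign σ : ℤ) : ℝ) * ∏ i, (A (σ i) i : ℝ)|
      ≤ ∑ σ : Equiv.Perm ι, |((Equiv.Perm.sign σ : ℤ) : ℝ) * ∏ i, (A (σ i) i : ℝ)| :=
        Finset.abs_sum_le_sum_abs _ _
    _ ≤ ∑ _σ : Equiv.Perm ι, ∏ e, B e := Finset.sum_le_sum fun σ _ => hterm σ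
    _ = (Fintype.card ι).factorial * ∏ e, B e := by
        rw [Finset.sum_const, Finset.card_univ, Fintype.card_perm, nsmul_eq_mul]

end Determinant

section Kernel

variable {T E : Type*} [Fintype E]

lemma exists_linearIndependent_rows {K : Type*} [Field K] (A : Matrix T E K) :
    ∃ (n : ℕ) (a : Fin n → T), LinearIndependent K (A.submatrix a id).row ∧
      ∀ x, (A.submatrix a id).mulVec x = 0 → A.mulVec x = 0 := by
  obtain ⟨κ, a, -, hspan, hli⟩ := exists_linearIndependent' K A.row
  have : Finite κ := hli.finite
  have : Fintype κ := Fintype.ofFinite κ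
  set σ := (Fintype.equivFin κ).symm
  refine ⟨Fintype.card κ, a ∘ σ, hli.comp σ σ.injective, fun x hx => funext fun k => ?_⟩
  have hle : Submodule.span K (Set.range A.row) ≤ LinearMap.ker ((dotProductBilin K K).flip x) := by
    rw [← hspan, Submodule.span_le]
    rintro _ ⟨i, rfl⟩
    obtain ⟨k, rfl⟩ := σ.surjective i
    exact congrFun hx k
  exact hle (Submodule.subset_span ⟨k, rfl⟩)

lemma exists_minor_ne_zero_or_exists_rows [DecidableEq E] {R : Type*} [CommRing R]
    [IsDomain R] (A : Matrix T E R) :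
    (∃ r : E → T, (A.submatrix r id).det ≠ 0) ∨
      ∃ n < Fintype.card E, ∃ a : Fin n → T,
        ∀ x, (A.submatrix a id).mulVec x = 0 → A.mulVec x = 0 := by
  set φ := algebraMap R (FractionRing R)
  have hφ : Function.Injective φ := IsFractionRing.injective R (FractionRing R)
  obtain ⟨n, a, hli, hker⟩ := exists_linearIndependent_rows (A.map φ)
  have hn : n ≤ Fintype.card E := by simpa using hli.fintype_card_le_finrank
  rcases hn.lt_or_eq with hlt | rfl
  · refine Or.inr ⟨n, hlt, a, fun x hx => ?_⟩
    have hφx : (A.map φ).mulVec (φ ∘ x) = 0 := by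
      refine hker _ (funext fun k => ?_)
      rw [Matrix.submatrix_map, ← RingHom.map_mulVec, hx, Pi.zero_apply, map_zero, Pi.zero_apply]
    refine funext fun k => hφ ?_
    rw [RingHom.map_mulVec, hφx, Pi.zero_apply, Pi.zero_apply, map_zero]
  · set σ := Fintype.equivFin E
    have hunit : IsUnit ((A.map φ).submatrix (a ∘ σ) id) :=
      Matrix.linearIndependent_rows_iff_isUnit.1 (hli.comp σ σ.injective)
    refine Or.inl ⟨a ∘ σ, fun hdet => ((Matrix.isUnit_iff_isUnit_det _).1 hunit).ne_zero ?_⟩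
    rw [Matrix.submatrix_map, ← RingHom.mapMatrix_apply, ← RingHom.map_det, hdet, map_zero]

lemma exists_minor_ne_zero_or_exists_mulVec_eq_zero [DecidableEq E] {R : Type*} [CommRing R]
    [IsDomain R] (A : Matrix T E R) :
    (∃ r : E → T, (A.submatrix r id).det ≠ 0) ∨ ∃ x ≠ 0, A.mulVec x = 0 := by
  refine (exists_minor_ne_zero_or_exists_rows A).imp_right ?_
  rintro ⟨n, hn, a, ha⟩
  have hnot : ¬ Function.Injective (A.submatrix a id).mulVecLin := fun hinj =>
    hn.not_ge (by simpa only [Fintype.card_fin] using card_le_of_injective R _ hinj)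
  rw [injective_iff_map_eq_zero] at hnot
  push Not at hnot
  obtain ⟨x, hx, hx0⟩ := hnot
  exact ⟨x, hx0, ha x hx⟩

open scoped Matrix.Norms.Elementwise in
lemma exists_int_mulVec_eq_zero_abs_le_of_card_lt {n : ℕ} (hn : n < Fintype.card E)
    (A : Matrix (Fin n) E ℤ) {B : ℝ} (hB : 1 ≤ B) (hA : ∀ k e, |(A k e : ℝ)| ≤ B) :
    ∃ x ≠ 0, A.mulVec x = 0 ∧ ∀ e, |(x e : ℝ)| ≤ (Fintype.card E * B) ^ Fintype.card E := by
  have : Nonempty E := Fintype.card_pos_iff.1 (by omega)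
  have hcard : (1 : ℝ) ≤ Fintype.card E := mod_cast Fintype.card_pos
  have hEB : 1 ≤ Fintype.card E * B := one_le_mul_of_one_le_of_one_le hcard hB
  rcases Nat.eq_zero_or_pos n with rfl | hpos
  · exact ⟨1, one_ne_zero, Subsingleton.elim _ _, fun e => by simpa using one_le_pow₀ hEB⟩
  obtain ⟨x, hx0, hAx, hx⟩ := Int.Matrix.exists_ne_zero_int_vec_norm_le A
    (by rwa [Fintype.card_fin]) (by rwa [Fintype.card_fin])
  rw [Fintype.card_fin] at hx
  have hnorm : ‖A‖ ≤ B := (Matrix.norm_le_iff (by linarith)).2 fun k e =>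
    (Int.norm_eq_abs _).trans_le (hA k e)
  have hlt : (n : ℝ) + 1 ≤ Fintype.card E := mod_cast hn
  have hexp : (n : ℝ) / (Fintype.card E - n) ≤ Fintype.card E := by
    rw [div_le_iff₀ (by linarith)]
    nlinarith [n.cast_nonneg (α := ℝ)]
  have hexp0 : 0 ≤ (n : ℝ) / (Fintype.card E - n) := div_nonneg n.cast_nonneg (by linarith)
  refine ⟨x, hx0, hAx, fun e => ?_⟩
  calc |(x e : ℝ)| ≤ ‖x‖ := by simpa only [Int.norm_eq_abs] using norm_le_pi_norm x e
    _ ≤ (Fintype.card E * max 1 ‖A‖) ^ ((n : ℝ) / (Fintype.card E - n)) := hx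
    _ ≤ (Fintype.card E * B) ^ ((n : ℝ) / (Fintype.card E - n)) :=
        Real.rpow_le_rpow (by positivity)
          (mul_le_mul_of_nonneg_left (max_le hB hnorm) (by positivity)) hexp0
    _ ≤ (Fintype.card E * B) ^ (Fintype.card E : ℝ) :=
        Real.rpow_le_rpow_of_exponent_le hEB hexp
    _ = (Fintype.card E * B) ^ Fintype.card E := Real.rpow_natCast _ _

lemma exists_int_mulVec_eq_zero_abs_le (A : Matrix T E ℤ) {B : ℝ} (hB : 1 ≤ B)
    (hA : ∀ k e, |(A k e : ℝ)| ≤ B) {c : E → ℤ} (hc : c ≠ 0) (hAc : A.mulVec c = 0) :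
    ∃ x ≠ 0, A.mulVec x = 0 ∧ ∀ e, |(x e : ℝ)| ≤ (Fintype.card E * B) ^ Fintype.card E := by
  classical
  rcases exists_minor_ne_zero_or_exists_rows A with ⟨r, hr⟩ | ⟨n, hn, a, ha⟩
  · refine absurd (Matrix.exists_mulVec_eq_zero_iff.1 ⟨c, hc, ?_⟩) hr
    exact funext fun e => congrFun hAc (r e)
  · obtain ⟨x, hx0, hx, hxB⟩ :=
      exists_int_mulVec_eq_zero_abs_le_of_card_lt hn (A.submatrix a id) hB fun k => hA (a k)
    exact ⟨x, hx0, ha x hx, hxB⟩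

end Kernel

/-! ### Counting zeros modulo primes -/

section Counting

/-- The integral zeros `(z, t)` of `F` with `|z| ≤ Z` and `|t| ≤ W`. -/
def intZeros (F : ℤ[X][Y]) (Z W : ℝ) : Set (ℤ × ℤ) :=
  {q | |(q.1 : ℝ)| ≤ Z ∧ |(q.2 : ℝ)| ≤ W ∧ F.evalEval q.2 q.1 = 0}

/-- The monomials with exponents in `E` are linearly independent modulo `F`: no nontrivial
combination of them is a multiple of `F` over `ℚ`. By clearing denominators it suffices to
consider combinations with integral coefficients. -/
def MonomialsIndependentModulo (E : Finset (ℕ × ℕ)) (F : ℤ[X][Y]) : Prop :=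
  ∀ G : ℤ[X][Y], G ≠ 0 → exponents G ⊆ E → ¬ toRat F ∣ toRat G

variable {F : ℤ[X][Y]} {E : Finset (ℕ × ℕ)} {D : ℕ} {Z W : ℝ}

lemma det_monomialMatrix_eq_zero {p : ℕ} (hp : p.Prime)
    (hbig : E.card.factorial * ∏ e ∈ E, Z ^ e.1 * W ^ e.2 < (p : ℝ) ^ E.card.choose 2)
    {z₁ t₁ : ℤ} (hns : ¬ (p : ℤ) ∣ (derivative F).evalEval t₁ z₁) {q : E → ℤ × ℤ}
    (hq : ∀ k, q k ∈ intZeros F Z W) (hz : ∀ k, (p : ℤ) ∣ (q k).1 - z₁)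
    (ht : ∀ k, (p : ℤ) ∣ (q k).2 - t₁) : (monomialMatrix q E).det = 0 := by
  have hcard : Fintype.card E = E.card := Fintype.card_coe E
  obtain ⟨x, c, hxc⟩ : IsCoprime (p : ℤ) ((derivative F).evalEval t₁ z₁) :=
    (Nat.prime_iff_prime_int.1 hp).irreducible.coprime_iff_not_dvd.2 hns
  obtain ⟨f, hf⟩ := exists_polynomial_approx_of_nonsingular F
    (⟨x, by linear_combination -hxc⟩ : (p : ℤ) ∣ 1 - c * _) (E.card.choose 2)
  have hdvd : (p : ℤ) ^ E.card.choose 2 ∣ (monomialMatrix q E).det := by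
    have htt (i j : E) : (p : ℤ) ∣ (q i).2 - (q j).2 := by
      simpa only [sub_sub_sub_cancel_right] using dvd_sub (ht i) (ht j)
    rw [← hcard]
    refine pow_choose_two_dvd_det htt (fun e => f ^ e.1.1 * X ^ e.1.2) fun k e => ?_
    rw [monomialMatrix, Matrix.of_apply, eval_mul, eval_pow, eval_pow, eval_X, ← sub_mul, hcard]
    exact ((pow_dvd_pow _ (Nat.le_succ _)).trans
      ((hf _ _ (hz k) (ht k) (hq k).2.2).trans (sub_dvd_pow_sub_pow _ _ _))).mul_right _
  have hlt : |((monomialMatrix q E).det : ℝ)| < (p : ℝ) ^ E.card.choose 2 := by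
    refine (abs_det_le _ (B := fun e => Z ^ e.1.1 * W ^ e.1.2) fun k e => ?_).trans_lt ?_
    · rw [monomialMatrix, Matrix.of_apply, Int.cast_mul, Int.cast_pow, Int.cast_pow, abs_mul,
        abs_pow, abs_pow]
      obtain ⟨hZ, hW, -⟩ := hq k
      have hZ0 : 0 ≤ Z := (abs_nonneg _).trans hZ
      gcongr
    · rwa [hcard, Finset.prod_coe_sort E fun e => Z ^ e.1 * W ^ e.2]
  exact Int.eq_zero_of_abs_lt_dvd hdvd (mod_cast hlt)

lemma card_image_zmod_le (hFD : BidegreeLE F D) {p : ℕ} [Fact p.Prime] {T : Finset (ℤ × ℤ)}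
    (hT : ∀ q ∈ T, F.evalEval q.2 q.1 = 0)
    (hns : ∀ q ∈ T, ¬ (p : ℤ) ∣ (derivative F).evalEval q.2 q.1) :
    (T.image (Prod.map Int.cast Int.cast : ℤ × ℤ → ZMod p × ZMod p)).card ≤ D * p := by
  set Fp : (ZMod p)[X][Y] := F.map (mapRingHom (Int.castRingHom (ZMod p)))
  set U := T.image (Prod.map Int.cast Int.cast : ℤ × ℤ → ZMod p × ZMod p)
  have evalEval_cast (G : ℤ[X][Y]) (q : ℤ × ℤ) :
      (G.map (mapRingHom (Int.castRingHom (ZMod p)))).evalEval (q.2 : ZMod p) q.1 =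
        (G.evalEval q.2 q.1 : ℤ) := map_mapRingHom_evalEval (Int.castRingHom (ZMod p)) G q.2 q.1
  have hzero : ∀ x ∈ U, Fp.evalEval x.2 x.1 = 0 := by
    rw [Finset.forall_mem_image]
    exact fun q hq => (evalEval_cast F q).trans (by rw [hT q hq, Int.cast_zero])
  have hfiber : ∀ x ∈ U, Fp.map (evalRingHom x.2) ≠ 0 := by
    rw [Finset.forall_mem_image]
    intro q hq h0
    apply hns q hq
    rw [← ZMod.intCast_zmod_eq_zero_iff_dvd, ← evalEval_cast, ← derivative_map,
      ← map_evalRingHom_eval, ← derivative_map]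
    exact (congrArg (fun P => (derivative P).eval (q.1 : ZMod p)) h0).trans (by simp)
  calc U.card ≤ Fp.natDegree * (U.image Prod.snd).card :=
        card_le_natDegree_mul_card_image_snd U hzero hfiber
    _ ≤ D * p := Nat.mul_le_mul (natDegree_map_le.trans hFD.natDegree_le)
        ((Finset.card_le_univ _).trans_eq (ZMod.card p))

lemma exists_finset_primes (k : ℕ) {n : ℕ} (hn : n ≠ 0) :
    ∃ s : Finset ℕ, s.card = k ∧ ∀ p ∈ s, p.Prime ∧ n < p ∧ p ≤ 2 ^ k * n := by
  induction k with
  | zero => exact ⟨∅, rfl, fun p hp => absurd hp (Finset.notMem_empty p)⟩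
  | succ k ih =>
    obtain ⟨s, hs, hsp⟩ := ih
    obtain ⟨q, hq, hlt, hle⟩ := Nat.exists_prime_lt_and_le_two_mul (2 ^ k * n) (by positivity)
    have hqs : q ∉ s := fun hqs => (hsp q hqs).2.2.not_gt hlt
    have hn : n ≤ 2 ^ k * n := Nat.le_mul_of_pos_left n (by positivity)
    refine ⟨insert q s, by rw [Finset.card_insert_of_notMem hqs, hs], ?_⟩
    rw [Finset.forall_mem_insert, pow_succ']
    refine ⟨⟨hq, by omega, by linarith⟩, fun p hp => ?_⟩
    obtain ⟨hpp, hnp, hpn⟩ := hsp p hp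
    exact ⟨hpp, hnp, by linarith⟩

lemma exists_prime_not_dvd {s : Finset ℕ} {n : ℕ} (hs : ∀ p ∈ s, p.Prime ∧ n < p) {x : ℤ}
    (hx0 : x ≠ 0) (hx : |(x : ℝ)| < (n : ℝ) ^ s.card) : ∃ p ∈ s, ¬ (p : ℤ) ∣ x := by
  by_contra! hdvd
  have hprod : ∏ p ∈ s, (p : ℤ) ∣ x :=
    Finset.prod_dvd_of_coprime (fun p hp p' hp' hne => Nat.isCoprime_iff_coprime.2
      ((Nat.coprime_primes (hs p hp).1 (hs p' hp').1).2 hne)) hdvd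
  have hle : (n : ℤ) ^ s.card ≤ |x| :=
    calc (n : ℤ) ^ s.card = ∏ _p ∈ s, (n : ℤ) := (Finset.prod_const _).symm
      _ ≤ ∏ p ∈ s, (p : ℤ) := Finset.prod_le_prod (fun p _ => Int.natCast_nonneg n)
          fun p hp => Int.ofNat_le.2 (hs p hp).2.le
      _ ≤ |x| := Int.le_of_dvd (abs_pos.2 hx0) ((dvd_abs _ _).2 hprod)
  exact hx.not_ge (mod_cast hle)

variable (hF : Irreducible (toRat F)) (hdeg : 0 < (toRat F).natDegree) (hFD : BidegreeLE F D)

include hF hdeg hFD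

lemma card_residue_class_le (hED : ∀ e ∈ E, e.1 ≤ D ∧ e.2 ≤ D)
    (hE : MonomialsIndependentModulo E F) {p : ℕ} (hp : p.Prime)
    (hbig : E.card.factorial * ∏ e ∈ E, Z ^ e.1 * W ^ e.2 < (p : ℝ) ^ E.card.choose 2)
    {z₁ t₁ : ℤ} (hns : ¬ (p : ℤ) ∣ (derivative F).evalEval t₁ z₁) {T : Finset (ℤ × ℤ)}
    (hT : ∀ q ∈ T, q ∈ intZeros F Z W) (hz : ∀ q ∈ T, (p : ℤ) ∣ q.1 - z₁)
    (ht : ∀ q ∈ T, (p : ℤ) ∣ q.2 - t₁) : T.card ≤ 2 * D ^ 3 := by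
  rcases exists_minor_ne_zero_or_exists_mulVec_eq_zero
    (monomialMatrix (fun q : T => q.1) E) with ⟨r, hr⟩ | ⟨c, hc, hAc⟩
  · exact absurd (det_monomialMatrix_eq_zero hp hbig hns (q := fun k => (r k).1)
      (fun k => hT _ (r k).2) (fun k => hz _ (r k).2) fun k => ht _ (r k).2) hr
  · have hsub := exponents_ofCoeffs_subset c
    refine card_integral_common_zeros_le hF hdeg (hE _ (ofCoeffs_ne_zero hc) hsub) hFD
      (fun e he => hED e (hsub he)) T (fun q hq => (hT q hq).2.2) fun q hq => ?_
    rw [← monomialMatrix_mulVec (fun q : T => q.1) c ⟨q, hq⟩, hAc, Pi.zero_apply]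

lemma card_singular_le {T : Finset (ℤ × ℤ)} (hT : ∀ q ∈ T, F.evalEval q.2 q.1 = 0)
    (hsing : ∀ q ∈ T, (derivative F).evalEval q.2 q.1 = 0) : T.card ≤ 2 * D ^ 3 := by
  refine card_integral_common_zeros_le hF hdeg (fun hdvd => ?_) hFD hFD.derivative T hT hsing
  rw [← derivative_toRat] at hdvd
  have hne : derivative (toRat F) ≠ 0 := mt derivative_eq_zero.1 hdeg.ne'
  exact (natDegree_le_of_dvd hdvd hne).not_gt (natDegree_derivative_lt hdeg.ne')

lemma card_nonsingular_mod_le (hED : ∀ e ∈ E, e.1 ≤ D ∧ e.2 ≤ D)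
    (hE : MonomialsIndependentModulo E F) {p : ℕ} (hp : p.Prime)
    (hbig : E.card.factorial * ∏ e ∈ E, Z ^ e.1 * W ^ e.2 < (p : ℝ) ^ E.card.choose 2)
    {T : Finset (ℤ × ℤ)} (hT : ∀ q ∈ T, q ∈ intZeros F Z W)
    (hns : ∀ q ∈ T, ¬ (p : ℤ) ∣ (derivative F).evalEval q.2 q.1) :
    T.card ≤ 2 * D ^ 3 * (D * p) := by
  have : Fact p.Prime := ⟨hp⟩
  refine (Finset.card_le_mul_card_image
    (f := (Prod.map Int.cast Int.cast : ℤ × ℤ → ZMod p × ZMod p)) T (2 * D ^ 3) ?_).trans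
    (Nat.mul_le_mul_left _ (card_image_zmod_le hFD (fun q hq => (hT q hq).2.2) hns))
  rw [Finset.forall_mem_image]
  intro q₀ hq₀
  have hmod : ∀ q ∈ T.filter fun q => Prod.map Int.cast Int.cast q =
      (Prod.map Int.cast Int.cast q₀ : ZMod p × ZMod p),
      (p : ℤ) ∣ q.1 - q₀.1 ∧ (p : ℤ) ∣ q.2 - q₀.2 := fun q hq => by
    obtain ⟨h1, h2⟩ := Prod.ext_iff.1 (Finset.mem_filter.1 hq).2
    exact ⟨(ZMod.intCast_eq_intCast_iff_dvd_sub _ _ _).1 h1.symm,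
      (ZMod.intCast_eq_intCast_iff_dvd_sub _ _ _).1 h2.symm⟩
  exact card_residue_class_le hF hdeg hFD hED hE hp hbig (hns q₀ hq₀)
    (fun q hq => hT q (Finset.mem_filter.1 hq).1) (fun q hq => (hmod q hq).1)
    fun q hq => (hmod q hq).2

lemma card_le_of_primes (hED : ∀ e ∈ E, e.1 ≤ D ∧ e.2 ≤ D)
    (hE : MonomialsIndependentModulo E F) {s : Finset ℕ} {n Q : ℕ}
    (hs : ∀ p ∈ s, p.Prime ∧ n < p ∧ p ≤ Q)
    (hbig : E.card.factorial * ∏ e ∈ E, Z ^ e.1 * W ^ e.2 < (n : ℝ) ^ E.card.choose 2)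
    {T : Finset (ℤ × ℤ)} (hT : ∀ q ∈ T, q ∈ intZeros F Z W)
    (hTs : ∀ q ∈ T, |(((derivative F).evalEval q.2 q.1 : ℤ) : ℝ)| < (n : ℝ) ^ s.card) :
    T.card ≤ 2 * D ^ 3 + s.card * (2 * D ^ 3 * (D * Q)) := by
  set Tsing := T.filter fun q => (derivative F).evalEval q.2 q.1 = 0
  set Tmod : ℕ → Finset (ℤ × ℤ) :=
    fun p => T.filter fun q => ¬ (p : ℤ) ∣ (derivative F).evalEval q.2 q.1
  have hcover : T ⊆ Tsing ∪ s.biUnion Tmod := by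
    intro q hq
    by_cases h0 : (derivative F).evalEval q.2 q.1 = 0
    · exact Finset.mem_union_left _ (Finset.mem_filter.2 ⟨hq, h0⟩)
    · obtain ⟨p, hp, hpq⟩ :=
        exists_prime_not_dvd (fun p hp => ⟨(hs p hp).1, (hs p hp).2.1⟩) h0 (hTs q hq)
      exact Finset.mem_union_right _
        (Finset.mem_biUnion.2 ⟨p, hp, Finset.mem_filter.2 ⟨hq, hpq⟩⟩)
  have hsing : Tsing.card ≤ 2 * D ^ 3 :=
    card_singular_le hF hdeg hFD (fun q hq => (hT q (Finset.mem_filter.1 hq).1).2.2)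
      fun q hq => (Finset.mem_filter.1 hq).2
  have hmod : ∀ p ∈ s, (Tmod p).card ≤ 2 * D ^ 3 * (D * Q) := by
    intro p hp
    obtain ⟨hpp, hnp, hpQ⟩ := hs p hp
    refine (card_nonsingular_mod_le hF hdeg hFD hED hE hpp (hbig.trans_le ?_)
      (fun q hq => hT q (Finset.mem_filter.1 hq).1)
      fun q hq => (Finset.mem_filter.1 hq).2).trans ?_
    · gcongr
    · gcongr
  calc T.card ≤ (Tsing ∪ s.biUnion Tmod).card := Finset.card_le_card hcover
    _ ≤ Tsing.card + (s.biUnion Tmod).card := Finset.card_union_le _ _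
    _ ≤ 2 * D ^ 3 + s.card * (2 * D ^ 3 * (D * Q)) :=
        Nat.add_le_add hsing (Finset.card_biUnion_le_card_mul _ _ _ hmod)

end Counting

/-! ### L-shaped sets of exponents -/

section LShape

variable {a b K L : ℕ}

/-- An L-shaped set of exponents: `a` columns of height `L` followed by `K` columns of
height `b`. -/
def lShape (a b K L : ℕ) : Finset (ℕ × ℕ) :=
  Finset.range a ×ˢ Finset.range L ∪ Finset.Ico a (a + K) ×ˢ Finset.range b

lemma mem_lShape {e : ℕ × ℕ} :
    e ∈ lShape a b K L ↔ e.1 < a ∧ e.2 < L ∨ (a ≤ e.1 ∧ e.1 < a + K) ∧ e.2 < b := by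
  simp only [lShape, Finset.mem_union, Finset.mem_product, Finset.mem_range, Finset.mem_Ico]

lemma disjoint_lShape_parts (a b K L : ℕ) : Disjoint (Finset.range a ×ˢ Finset.range L)
    (Finset.Ico a (a + K) ×ˢ Finset.range b) :=
  Finset.disjoint_product.2 (.inl (Finset.disjoint_left.2 fun _ hi hi' =>
    (Finset.mem_Ico.1 hi').1.not_gt (Finset.mem_range.1 hi)))

lemma card_lShape (a b K L : ℕ) : (lShape a b K L).card = a * L + K * b := by
  rw [lShape, Finset.card_union_of_disjoint (disjoint_lShape_parts a b K L),
    Finset.card_product, Finset.card_product, Finset.card_range, Finset.card_range,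
    Finset.card_range, Nat.card_Ico, Nat.add_sub_cancel_left]

lemma monomialsIndependentModulo_lShape {F : ℤ[X][Y]} {α : ℝ}
    (hF : IsLeadingExponent α (toRat F) a b) (K L : ℕ) :
    MonomialsIndependentModulo (lShape a b K L) F := by
  intro G hG hGE
  refine hF.not_dvd (toRat_ne_zero hG) fun e he => ?_
  rw [exponents_toRat] at he
  have := mem_lShape.1 (hGE he)
  omega

lemma sum_range_natCast_le (n : ℕ) : ∑ j ∈ Finset.range n, (j : ℝ) ≤ (n : ℝ) ^ 2 / 2 := by
  induction n with
  | zero => simp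
  | succ n ih => rw [Finset.sum_range_succ]; push_cast; linarith

lemma sum_weight_lShape_le {d : ℕ} {α : ℝ} (hα : 0 ≤ α) (ha : a ≤ d) (hb : b ≤ d) (K L : ℕ) :
    ∑ e ∈ lShape a b K L, (α * e.1 + e.2) ≤
      (a * (L : ℝ) ^ 2 + α * b * (K : ℝ) ^ 2) / 2 + (α + 1) * d * (a * L + K * b) := by
  have hcolumn : ∀ i ∈ Finset.range a, ∑ j ∈ Finset.range L, (α * (i : ℝ) + j) ≤
      L * ((α + 1) * d) + (L : ℝ) ^ 2 / 2 := fun i hi => by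
    have hid : (i : ℝ) ≤ d := mod_cast (Finset.mem_range.1 hi).le.trans ha
    rw [Finset.sum_add_distrib, Finset.sum_const, Finset.card_range, nsmul_eq_mul]
    refine add_le_add (mul_le_mul_of_nonneg_left ?_ (Nat.cast_nonneg L)) (sum_range_natCast_le L)
    nlinarith
  have hrow : ∀ j ∈ Finset.range b, ∑ i ∈ Finset.range K, (α * ((a + i : ℕ) : ℝ) + j) ≤
      K * ((α + 1) * d) + α * ((K : ℝ) ^ 2 / 2) := fun j hj => by
    have hjd : (j : ℝ) ≤ d := mod_cast (Finset.mem_range.1 hj).le.trans hb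
    have had : (a : ℝ) ≤ d := mod_cast ha
    calc ∑ i ∈ Finset.range K, (α * ((a + i : ℕ) : ℝ) + j)
        ≤ ∑ i ∈ Finset.range K, ((α + 1) * d + α * i) := Finset.sum_le_sum fun i _ => by
          push_cast
          nlinarith
      _ = K * ((α + 1) * d) + α * ∑ i ∈ Finset.range K, (i : ℝ) := by
          rw [Finset.sum_add_distrib, Finset.sum_const, Finset.card_range, nsmul_eq_mul,
            Finset.mul_sum]
      _ ≤ _ := by gcongr; exact sum_range_natCast_le K
  have hcolumns := Finset.sum_le_card_nsmul _ _ _ hcolumn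
  have hrows := Finset.sum_le_card_nsmul _ _ _ hrow
  rw [Finset.card_range, nsmul_eq_mul] at hcolumns hrows
  rw [lShape, Finset.sum_union (disjoint_lShape_parts a b K L), Finset.sum_product,
    Finset.sum_product_right, Finset.sum_congr rfl fun j _ => Finset.sum_Ico_eq_sum_range _ _ _]
  simp only [add_tsub_cancel_left]
  linarith

lemma sub_le_mul_card_lShape {d : ℕ} {α w : ℝ} (hb : b ≤ d) (hw : w ≤ α * a + b)
    (hL : L ≤ α * K + 1) : w * L - d ≤ α * (lShape a b K L).card := by
  have hbd : (b : ℝ) ≤ d := mod_cast hb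
  rw [card_lShape]
  push_cast
  calc w * L - d ≤ (α * a + b) * L - b := by gcongr
    _ = α * (a * L) + (L - 1) * b := by ring
    _ ≤ α * (a * L) + α * K * b := by gcongr; linarith
    _ = α * (a * L + K * b) := by ring

lemma exists_lShape_weight_le (d : ℕ) {α ε : ℝ} (hα : 0 < α) (hε : 0 < ε) :
    ∃ K L : ℕ, ∀ (a b : ℕ) (w : ℝ), a ≤ d → b ≤ d → α ≤ w → w ≤ α * a + b →
      2 ≤ (lShape a b K L).card ∧ ∑ e ∈ lShape a b K L, (α * e.1 + e.2) ≤
        (α / w + ε) * ((lShape a b K L).card.choose 2 : ℕ) := by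
  obtain ⟨K, hK⟩ := exists_nat_ge (max ((d / α + 2) / α)
    ((2 * ((α + 1) * d) + (1 + ε) * (d / α + 1)) / (ε * α)))
  rw [max_le_iff, div_le_iff₀ hα, div_le_iff₀ (mul_pos hε hα)] at hK
  obtain ⟨hK, hKε⟩ := hK
  refine ⟨K, ⌈α * K⌉₊, fun a b w ha hb hαw hw => ?_⟩
  set L := ⌈α * (K : ℝ)⌉₊
  have hLK : α * K ≤ L := Nat.le_ceil _
  have hw0 : 0 < w := hα.trans_le hαw
  have hd0 : 0 ≤ d / α := by positivity
  set N := (lShape a b K L).card with hN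
  have hNw : w * L - d ≤ α * N :=
    sub_le_mul_card_lShape hb hw (Nat.ceil_lt_add_one (by positivity)).le
  have hNL : L - d / α ≤ α / w * N := by
    rw [div_mul_eq_mul_div, le_div_iff₀ hw0]
    have : d ≤ d / α * w := by
      rw [div_mul_eq_mul_div, le_div_iff₀ hα]
      gcongr
    linarith
  have hδ : α / w ≤ 1 := (div_le_one hw0).2 hαw
  have hLN : L - d / α ≤ N := hNL.trans (mul_le_of_le_one_left (Nat.cast_nonneg N) hδ)
  have hN2 : (2 : ℝ) ≤ N := by linarith
  refine ⟨mod_cast hN2, ?_⟩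
  have hkey : L + 2 * ((α + 1) * d) ≤ (α / w + ε) * (N - 1) := by
    have : ε * (α * K - d / α) ≤ ε * N := by gcongr; linarith
    linarith
  have hcard : (N : ℝ) = a * L + K * b := by rw [hN, card_lShape]; push_cast; rfl
  calc ∑ e ∈ lShape a b K L, (α * e.1 + e.2)
      ≤ (a * (L : ℝ) ^ 2 + α * b * (K : ℝ) ^ 2) / 2 + (α + 1) * d * N := by
        rw [hcard]; exact sum_weight_lShape_le hα.le ha hb K L
    _ = (a * (L : ℝ) ^ 2 + α * K * (K * b)) / 2 + (α + 1) * d * N := by ring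
    _ ≤ (a * (L : ℝ) ^ 2 + L * (K * b)) / 2 + (α + 1) * d * N := by gcongr
    _ = N / 2 * (L + 2 * ((α + 1) * d)) := by rw [hcard]; ring
    _ ≤ N / 2 * ((α / w + ε) * (N - 1)) := by gcongr
    _ = (α / w + ε) * (N.choose 2 : ℕ) := by rw [Nat.cast_choose_two]; ring

end LShape

/-! ### Polynomials with coefficients of polynomial size -/

section Size

variable {F : ℤ[X][Y]} {E : Finset (ℕ × ℕ)} {d : ℕ} {B Z : ℝ}

lemma card_le_of_forall_le (hE : ∀ e ∈ E, e.1 ≤ d ∧ e.2 ≤ d) : E.card ≤ (d + 1) ^ 2 := by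
  have hsub : E ⊆ Finset.range (d + 1) ×ˢ Finset.range (d + 1) := fun e he => by
    have := hE e he
    rw [Finset.mem_product, Finset.mem_range, Finset.mem_range]
    omega
  simpa only [Finset.card_product, Finset.card_range, ← sq] using Finset.card_le_card hsub

lemma abs_monomialMatrix_le {T : Type*} {q : T → ℤ × ℤ} {k : T}
    (hE : ∀ e ∈ E, e.1 ≤ d ∧ e.2 ≤ d) (hZ : 1 ≤ Z)
    (hz : |((q k).1 : ℝ)| ≤ Z) (ht : |((q k).2 : ℝ)| ≤ Z) (e : E) :
    |(monomialMatrix q E k e : ℝ)| ≤ Z ^ (2 * d) := by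
  have pow_le {x : ℝ} {i : ℕ} (hx : |x| ≤ Z) (hi : i ≤ d) : |x| ^ i ≤ Z ^ d :=
    (pow_le_pow_left₀ (abs_nonneg _) hx _).trans (pow_le_pow_right₀ hZ hi)
  rw [monomialMatrix, Matrix.of_apply, Int.cast_mul, Int.cast_pow, Int.cast_pow, abs_mul, abs_pow,
    abs_pow, two_mul, pow_add]
  exact mul_le_mul (pow_le hz (hE e e.2).1) (pow_le ht (hE e e.2).2) (by positivity) (by positivity)

lemma abs_evalEval_le (hF : BidegreeLE F d) (hB : ∀ i j, |((F.coeff i).coeff j : ℝ)| ≤ B)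
    (hZ : 1 ≤ Z) {z t : ℤ} (hz : |(z : ℝ)| ≤ Z) (ht : |(t : ℝ)| ≤ Z) :
    |((F.evalEval t z : ℤ) : ℝ)| ≤ (d + 1) ^ 2 * (B * Z ^ (2 * d)) := by
  have hB0 : 0 ≤ B := (abs_nonneg _).trans (hB 0 0)
  rw [← ofCoeffs_exponents F, ← monomialMatrix_mulVec (fun _ : Unit => (z, t)) _ (), Matrix.mulVec,
    dotProduct, Int.cast_sum]
  refine (Finset.abs_sum_le_sum_abs _ _).trans
    ((Finset.sum_le_card_nsmul _ _ (B * Z ^ (2 * d)) fun e _ => ?_).trans ?_)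
  · rw [Int.cast_mul, abs_mul, mul_comm]
    exact mul_le_mul (hB _ _) (abs_monomialMatrix_le hF hZ hz ht e) (abs_nonneg _) hB0
  · rw [nsmul_eq_mul, Finset.card_univ, Fintype.card_coe]
    gcongr
    exact_mod_cast card_le_of_forall_le hF

lemma abs_evalEval_derivative_le (hF : BidegreeLE F d)
    (hB : ∀ i j, |((F.coeff i).coeff j : ℝ)| ≤ B) (hZ : 1 ≤ Z) {z t : ℤ} (hz : |(z : ℝ)| ≤ Z)
    (ht : |(t : ℝ)| ≤ Z) :
    |(((derivative F).evalEval t z : ℤ) : ℝ)| ≤ (d + 1) ^ 3 * (B * Z ^ (2 * d)) := by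
  have hB0 : 0 ≤ B := (abs_nonneg _).trans (hB 0 0)
  have hB' (i j : ℕ) : |(((derivative F).coeff i).coeff j : ℝ)| ≤ (d + 1) * B := by
    rw [coeff_coeff_derivative]
    by_cases hi : i + 1 ≤ d + 1
    · have : (i : ℝ) + 1 ≤ d + 1 := mod_cast hi
      push_cast
      rw [abs_mul, mul_comm, abs_of_nonneg (by positivity : (0 : ℝ) ≤ (i : ℝ) + 1)]
      gcongr
      exact hB _ _
    · rw [coeff_eq_zero_of_natDegree_lt (hF.natDegree_le.trans_lt (by omega)), coeff_zero, zero_mul,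
        Int.cast_zero, abs_zero]
      positivity
  exact (abs_evalEval_le hF.derivative hB' hZ hz ht).trans_eq (by ring)

/-- Primes of size about `X` suffice, and boundedly many of them. -/
lemma card_le_mul_of_prod_le {D N k : ℕ} {W X : ℝ} (hF : Irreducible (toRat F))
    (hdeg : 0 < (toRat F).natDegree) (hFD : BidegreeLE F D) (hED : ∀ e ∈ E, e.1 ≤ D ∧ e.2 ≤ D)
    (hE : MonomialsIndependentModulo E F) (hE2 : 2 ≤ E.card) (hEN : E.card ≤ N) (hX : 1 ≤ X)
    (hprod : ∏ e ∈ E, Z ^ e.1 * W ^ e.2 ≤ X ^ E.card.choose 2)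
    {T : Finset (ℤ × ℤ)} (hT : ∀ q ∈ T, q ∈ intZeros F Z W)
    (hTs : ∀ q ∈ T, |(((derivative F).evalEval q.2 q.1 : ℤ) : ℝ)| < X ^ k) :
    (T.card : ℝ) ≤ 2 * D ^ 3 * (1 + k * D * 2 ^ k * (N.factorial + 2)) * X := by
  set f : ℝ := N.factorial + 1
  have hf : 1 ≤ f := le_add_of_nonneg_left (Nat.cast_nonneg _)
  have hfX : 1 ≤ f * X := one_le_mul_of_one_le_of_one_le hf hX
  set n := ⌈f * X⌉₊
  have hfn : f * X ≤ n := Nat.le_ceil _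
  have hn0 : n ≠ 0 := (Nat.ceil_pos.2 (one_pos.trans_le hfX)).ne'
  have hnX : (n : ℝ) ≤ (N.factorial + 2) * X := by
    have := (Nat.ceil_lt_add_one (zero_le_one.trans hfX)).le
    linarith
  have hchoose : E.card.choose 2 ≠ 0 := (Nat.choose_pos hE2).ne'
  have hbig : E.card.factorial * ∏ e ∈ E, Z ^ e.1 * W ^ e.2 < (n : ℝ) ^ E.card.choose 2 :=
    calc E.card.factorial * ∏ e ∈ E, Z ^ e.1 * W ^ e.2
        ≤ E.card.factorial * X ^ E.card.choose 2 := by gcongr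
      _ ≤ N.factorial * X ^ E.card.choose 2 := by gcongr
      _ < f * X ^ E.card.choose 2 := by gcongr; exact lt_add_one _
      _ ≤ f ^ E.card.choose 2 * X ^ E.card.choose 2 := by gcongr; exact le_self_pow₀ hf hchoose
      _ = (f * X) ^ E.card.choose 2 := (mul_pow _ _ _).symm
      _ ≤ (n : ℝ) ^ E.card.choose 2 := by gcongr
  have hXn : X ≤ n := (le_mul_of_one_le_left (by linarith) hf).trans hfn
  obtain ⟨s, hs, hsp⟩ := exists_finset_primes k hn0
  have hcard : T.card ≤ 2 * D ^ 3 + s.card * (2 * D ^ 3 * (D * (2 ^ k * n))) :=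
    card_le_of_primes hF hdeg hFD hED hE hsp hbig hT fun q hq =>
      (hTs q hq).trans_le (by rw [hs]; gcongr)
  rw [hs] at hcard
  calc (T.card : ℝ) ≤ 2 * D ^ 3 * 1 + k * (2 * D ^ 3 * (D * (2 ^ k * n))) := by
        rw [mul_one]; exact_mod_cast hcard
    _ ≤ 2 * D ^ 3 * X + k * (2 * D ^ 3 * (D * (2 ^ k * ((N.factorial + 2) * X)))) := by gcongr
    _ = 2 * D ^ 3 * (1 + k * D * 2 ^ k * (N.factorial + 2)) * X := by ring

end Size

section CoefficientsBounded

lemma natCast_le_rpow {H : ℝ} (hH : 2 ≤ H) (n : ℕ) : (n : ℝ) ≤ H ^ (n : ℝ) := by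
  rw [Real.rpow_natCast]
  calc (n : ℝ) ≤ 2 ^ n := mod_cast Nat.lt_two_pow_self.le
    _ ≤ H ^ n := by gcongr

lemma natCast_pow_mul_rpow_pow_le {H : ℝ} (hH : 2 ≤ H) (n j l : ℕ) (β : ℝ) :
    (n : ℝ) ^ j * (H ^ β) ^ l ≤ H ^ (n * j + β * l) := by
  have hH0 : 0 < H := two_pos.trans_le hH
  rw [Real.rpow_add hH0, Real.rpow_mul hH0.le, Real.rpow_mul hH0.le, Real.rpow_natCast _ j,
    Real.rpow_natCast _ l]
  gcongr
  exact natCast_le_rpow hH n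

lemma prod_rpow_pow_mul_pow {H : ℝ} (hH : 0 < H) (α : ℝ) (E : Finset (ℕ × ℕ)) :
    ∏ e ∈ E, (H ^ α) ^ e.1 * H ^ e.2 = H ^ ∑ e ∈ E, (α * e.1 + e.2) := by
  rw [Real.rpow_sum_of_pos hH]
  refine Finset.prod_congr rfl fun e _ => ?_
  rw [Real.rpow_add hH, Real.rpow_mul hH.le, Real.rpow_natCast, Real.rpow_natCast]

lemma abs_le_rpow_of_mem_intZeros {F : ℤ[X][Y]} {H α : ℝ} (hH : 1 ≤ H) (hα : 0 < α) {q : ℤ × ℤ}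
    (hq : q ∈ intZeros F (H ^ α) H) : |(q.1 : ℝ)| ≤ H ^ (α + 1) ∧ |(q.2 : ℝ)| ≤ H ^ (α + 1) := by
  refine ⟨hq.1.trans (Real.rpow_le_rpow_of_exponent_le hH (by linarith)), hq.2.1.trans ?_⟩
  exact Real.self_le_rpow_of_one_le hH (by linarith)

lemma abs_evalEval_derivative_lt {F : ℤ[X][Y]} {d k : ℕ} {H α β A : ℝ} (hFd : BidegreeLE F d)
    (hα : 0 < α) (hH : 2 ≤ H) (hA : ∀ i j, |((F.coeff i).coeff j : ℝ)| ≤ H ^ A)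
    (hk : A + ((d + 1 : ℕ) * (3 : ℕ) + (α + 1) * (2 * d : ℕ)) < β * k) {q : ℤ × ℤ}
    (hq : q ∈ intZeros F (H ^ α) H) :
    |(((derivative F).evalEval q.2 q.1 : ℤ) : ℝ)| < (H ^ β) ^ k := by
  have hH1 : 1 < H := one_lt_two.trans_le hH
  have hH0 : 0 < H := one_pos.trans hH1
  obtain ⟨hz, ht⟩ := abs_le_rpow_of_mem_intZeros hH1.le hα hq
  calc |(((derivative F).evalEval q.2 q.1 : ℤ) : ℝ)|
      ≤ (d + 1) ^ 3 * (H ^ A * (H ^ (α + 1)) ^ (2 * d)) :=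
        abs_evalEval_derivative_le hFd hA (Real.one_le_rpow hH1.le (by linarith)) hz ht
    _ = H ^ A * (((d + 1 : ℕ) : ℝ) ^ 3 * (H ^ (α + 1)) ^ (2 * d)) := by push_cast; ring
    _ ≤ H ^ A * H ^ ((d + 1 : ℕ) * (3 : ℕ) + (α + 1) * (2 * d : ℕ)) := by
        gcongr
        exact natCast_pow_mul_rpow_pow_le hH _ _ _ _
    _ < H ^ (β * k) := by
        rw [← Real.rpow_add hH0]
        exact Real.rpow_lt_rpow_of_exponent_lt hH1 hk
    _ = (H ^ β) ^ k := by rw [Real.rpow_mul hH0.le, Real.rpow_natCast]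

lemma exists_card_le_of_coeff_le (d : ℕ) {α ε : ℝ} (hα : 0 < α) (hε : 0 < ε) (A : ℝ) :
    ∃ C : ℝ, ∀ F : ℤ[X][Y], BidegreeLE F d → Irreducible (toRat F) → ∀ e ∈ exponents F, 1 ≤ e.1 →
      ∀ H : ℝ, 2 ≤ H → (∀ i j, |((F.coeff i).coeff j : ℝ)| ≤ H ^ A) →
      ∀ T : Finset (ℤ × ℤ), (∀ q ∈ T, q ∈ intZeros F (H ^ α) H) →
        T.card ≤ C * H ^ (α / (α * e.1 + e.2) + ε) := by
  obtain ⟨K, L, hKL⟩ := exists_lShape_weight_le d hα hε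
  obtain ⟨k, hk⟩ := exists_nat_gt ((A + ((d + 1 : ℕ) * (3 : ℕ) + (α + 1) * (2 * d : ℕ))) / ε)
  rw [div_lt_iff₀' hε] at hk
  refine ⟨2 * (d + K + L : ℕ) ^ 3 * (1 + k * (d + K + L : ℕ) * 2 ^ k *
    ((d * L + K * d).factorial + 2)), fun F hFd hF e he he1 H hH hA T hT => ?_⟩
  have hH0 : 0 < H := two_pos.trans_le hH
  have hH1 : 1 ≤ H := one_le_two.trans hH
  obtain ⟨a, b, hab⟩ := exists_isLeadingExponent α hF.ne_zero
  obtain ⟨ha, hb⟩ := hFd.toRat _ hab.1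
  have he' : e ∈ exponents (toRat F) := by rwa [exponents_toRat]
  have hw : α ≤ α * e.1 + e.2 := by
    have : (1 : ℝ) ≤ e.1 := mod_cast he1
    nlinarith [Nat.cast_nonneg (α := ℝ) e.2]
  obtain ⟨hcard, hweight⟩ := hKL a b _ ha hb hw (hab.weight_le he')
  set δ := α / (α * e.1 + e.2)
  have hδ : 0 ≤ δ := by positivity
  refine card_le_mul_of_prod_le hF (natDegree_pos_of_mem_exponents he' he1)
    (hFd.mono (by omega)) (fun e he => ?_) (monomialsIndependentModulo_lShape hab K L)
    hcard ?_ (Real.one_le_rpow hH1 (by linarith)) ?_ hT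
    fun q hq => abs_evalEval_derivative_lt hFd hα hH hA (hk.trans_le ?_) (hT q hq)
  · have := mem_lShape.1 he
    omega
  · rw [card_lShape]
    gcongr
  · rw [prod_rpow_pow_mul_pow hH0, ← Real.rpow_natCast, ← Real.rpow_mul hH0.le]
    exact Real.rpow_le_rpow_of_exponent_le hH1 hweight
  · gcongr
    linarith

end CoefficientsBounded

/-! ### Removing the assumption on the coefficients -/

section Siegel

variable {F : ℤ[X][Y]} {d : ℕ} {Z : ℝ}

lemma exponents_mul_C_C {R : Type*} [CommSemiring R] [NoZeroDivisors R] (P : R[X][Y]) {c : R}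
    (hc : c ≠ 0) : exponents (P * C (C c)) = exponents P := by
  ext e
  rw [mem_exponents, mem_exponents, coeff_mul_C, coeff_mul_C]
  exact mul_ne_zero_iff_right hc

lemma exists_coeff_le_of_evalEval_eq_zero (hF : F ≠ 0) (hFd : BidegreeLE F d) (hZ : 1 ≤ Z)
    {T : Finset (ℤ × ℤ)} (hT : ∀ q ∈ T, q ∈ intZeros F Z Z) :
    ∃ G : ℤ[X][Y], G ≠ 0 ∧ exponents G ⊆ exponents F ∧ (∀ q ∈ T, G.evalEval q.2 q.1 = 0) ∧
      ∀ i j, |((G.coeff i).coeff j : ℝ)| ≤ ((d + 1) ^ 2 * Z ^ (2 * d)) ^ (d + 1) ^ 2 := by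
  set A := monomialMatrix (fun q : T => q.1) (exponents F)
  set f : exponents F → ℤ := fun e => (F.coeff e.1.1).coeff e.1.2
  have hf : f ≠ 0 := by
    obtain ⟨e, he⟩ := exponents_nonempty hF
    exact Function.ne_iff.2 ⟨⟨e, he⟩, mem_exponents.1 he⟩
  have hAf : A.mulVec f = 0 := funext fun q => by
    rw [monomialMatrix_mulVec, ofCoeffs_exponents]
    exact (hT _ q.2).2.2
  have hZd : 1 ≤ Z ^ (2 * d) := one_le_pow₀ hZ
  obtain ⟨g, hg, hAg, hgle⟩ := exists_int_mulVec_eq_zero_abs_le A hZd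
    (fun q e => abs_monomialMatrix_le hFd hZ (hT _ q.2).1 (hT _ q.2).2.1 e) hf hAf
  refine ⟨ofCoeffs (exponents F) g, ofCoeffs_ne_zero hg, exponents_ofCoeffs_subset g,
    fun q hq => ?_, fun i j => ?_⟩
  · rw [← monomialMatrix_mulVec (fun q : T => q.1) g ⟨q, hq⟩, hAg, Pi.zero_apply]
  · have hcard : Fintype.card (exponents F) ≤ (d + 1) ^ 2 := by
      rw [Fintype.card_coe]
      exact card_le_of_forall_le hFd
    have hcard' : (Fintype.card (exponents F) : ℝ) ≤ (d + 1) ^ 2 := mod_cast hcard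
    rw [coeff_coeff_ofCoeffs]
    split_ifs with h
    · refine (hgle _).trans ((pow_le_pow_left₀ (by positivity) (by gcongr) _).trans
        (pow_le_pow_right₀ ?_ hcard))
      exact one_le_mul_of_one_le_of_one_le (one_le_pow₀ (by linarith [d.cast_nonneg (α := ℝ)])) hZd
    · rw [Int.cast_zero, abs_zero]
      positivity

/-- If the zeros of `F` in a box are numerous enough to determine `F` up to a constant factor, then
`F` may be replaced by the small solution of the linear system they impose on its coefficients. -/
lemma card_le_or_exists_coeff_le (hF : Irreducible (toRat F)) (hdeg : 0 < (toRat F).natDegree)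
    (hFd : BidegreeLE F d) (hZ : 1 ≤ Z) {T : Finset (ℤ × ℤ)} (hT : ∀ q ∈ T, q ∈ intZeros F Z Z) :
    T.card ≤ 2 * d ^ 3 ∨ ∃ G : ℤ[X][Y], Irreducible (toRat G) ∧ exponents G = exponents F ∧
      (∀ q ∈ T, G.evalEval q.2 q.1 = 0) ∧
      ∀ i j, |((G.coeff i).coeff j : ℝ)| ≤ ((d + 1) ^ 2 * Z ^ (2 * d)) ^ (d + 1) ^ 2 := by
  have hF0 : F ≠ 0 := fun h0 => hF.ne_zero (by rw [h0, toRat, Polynomial.map_zero])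
  obtain ⟨G, hG, hGF, hGT, hGle⟩ := exists_coeff_le_of_evalEval_eq_zero hF0 hFd hZ hT
  by_cases hdvd : toRat F ∣ toRat G
  · right
    obtain ⟨c, hc, hGc⟩ := exists_eq_mul_C_of_dvd_of_exponents_subset (toRat_ne_zero hG) hdvd
      (by rwa [exponents_toRat, exponents_toRat])
    have hunit : IsUnit (C (C c)) := (hc.isUnit.map C).map C
    refine ⟨G, ?_, ?_, hGT, hGle⟩
    · rw [hGc]
      exact (irreducible_mul_isUnit hunit).2 hF
    · rw [← exponents_toRat, hGc, exponents_mul_C_C _ hc, exponents_toRat]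
  · exact .inl (card_integral_common_zeros_le hF hdeg hdvd hFd (fun e he => hFd e (hGF he)) T
      (fun q hq => (hT q hq).2.2) hGT)

theorem exists_card_le (d : ℕ) {α ε : ℝ} (hα : 0 < α) (hε : 0 < ε) :
    ∃ C : ℝ, ∀ F : ℤ[X][Y], BidegreeLE F d → Irreducible (toRat F) → ∀ e ∈ exponents F, 1 ≤ e.1 →
      ∀ H : ℝ, 2 ≤ H → ∀ T : Finset (ℤ × ℤ), (∀ q ∈ T, q ∈ intZeros F (H ^ α) H) →
        T.card ≤ C * H ^ (α / (α * e.1 + e.2) + ε) := by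
  obtain ⟨C, hC⟩ := exists_card_le_of_coeff_le d hα hε
    (((d + 1 : ℕ) * (2 : ℕ) + (α + 1) * (2 * d : ℕ)) * ((d + 1) ^ 2 : ℕ))
  refine ⟨max (2 * (d : ℝ) ^ 3) C, fun F hFd hF e he he1 H hH T hT => ?_⟩
  have hH1 : 1 ≤ H := one_le_two.trans hH
  have hpow : 1 ≤ H ^ (α / (α * e.1 + e.2) + ε) := Real.one_le_rpow hH1 (by positivity)
  have hdeg : 0 < (toRat F).natDegree :=
    natDegree_pos_of_mem_exponents (by rwa [exponents_toRat]) he1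
  have hTbox : ∀ q ∈ T, q ∈ intZeros F (H ^ (α + 1)) (H ^ (α + 1)) := fun q hq =>
    have h := abs_le_rpow_of_mem_intZeros hH1 hα (hT q hq)
    ⟨h.1, h.2, (hT q hq).2.2⟩
  rcases card_le_or_exists_coeff_le hF hdeg hFd (Real.one_le_rpow hH1 (by linarith)) hTbox with
    hcard | ⟨G, hG, hGF, hGT, hGle⟩
  · calc (T.card : ℝ) ≤ 2 * (d : ℝ) ^ 3 := mod_cast hcard
      _ ≤ max (2 * (d : ℝ) ^ 3) C * 1 := by rw [mul_one]; exact le_max_left _ _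
      _ ≤ _ := by gcongr
  · refine (hC G (by rwa [BidegreeLE, hGF]) hG e (by rwa [hGF]) he1 H hH (fun i j => ?_) T
      fun q hq => ⟨(hT q hq).1, (hT q hq).2.1, hGT q hq⟩).trans (by gcongr; exact le_max_right _ _)
    rw [Real.rpow_mul (by linarith), Real.rpow_natCast]
    refine (hGle i j).trans (pow_le_pow_left₀ (by positivity) ?_ _)
    exact_mod_cast natCast_pow_mul_rpow_pow_le hH (d + 1) 2 (2 * d) (α + 1)

end Siegel

/-! ### Polynomials in two variables -/

section ToBivariate

/-- A polynomial in two variables as a bivariate polynomial; the variable `0`, which stands for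
`z`, becomes the outer variable `Y`, and the variable `1` becomes the inner one. -/
noncomputable def toBivariate (R : Type*) [CommRing R] : MvPolynomial (Fin 2) R ≃ₐ[R] R[X][Y] :=
  (equivMvPolynomial R).symm.trans Bivariate.swap

variable {R : Type*} [CommRing R]

lemma toBivariate_C (r : R) : toBivariate R (.C r) = C (C r) := by
  rw [toBivariate, AlgEquiv.trans_apply, equivMvPolynomial_symm_C, Bivariate.swap_C_C]

lemma toBivariate_X_zero : toBivariate R (.X 0) = Y := by
  rw [toBivariate, AlgEquiv.trans_apply, equivMvPolynomial_symm_X_0, Bivariate.swap_X]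

lemma toBivariate_X_one : toBivariate R (.X 1) = C X := by
  rw [toBivariate, AlgEquiv.trans_apply, equivMvPolynomial_symm_X_1, Bivariate.swap_Y]

lemma toBivariate_monomial (s : Fin 2 →₀ ℕ) (r : R) :
    toBivariate R (MvPolynomial.monomial s r) = monomial (s 0) (monomial (s 1) r) := by
  rw [MvPolynomial.monomial_eq, Finsupp.prod_fintype _ _ fun _ => pow_zero _, Fin.prod_univ_two,
    map_mul, map_mul, map_pow, map_pow, toBivariate_C, toBivariate_X_zero, toBivariate_X_one,
    ← C_mul_X_pow_eq_monomial, ← C_mul_X_pow_eq_monomial, C_mul, C_pow]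
  ring

lemma mem_exponents_toBivariate {P : MvPolynomial (Fin 2) R} {e : ℕ × ℕ} :
    e ∈ exponents (toBivariate R P) ↔ P.coeff (.single 0 e.1 + .single 1 e.2) ≠ 0 := by
  have coeff_coeff_toBivariate : ((toBivariate R P).coeff e.1).coeff e.2 =
      P.coeff (.single 0 e.1 + .single 1 e.2) := by
    induction P using MvPolynomial.induction_on' with
    | monomial s r =>
      have hs : s = .single 0 e.1 + .single 1 e.2 ↔ s 0 = e.1 ∧ s 1 = e.2 := by
        simp [Finsupp.ext_iff, Fin.forall_fin_two]
      rw [toBivariate_monomial, MvPolynomial.coeff_monomial, coeff_monomial, if_congr hs rfl rfl,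
        ite_and]
      split_ifs with h0 h1
      · rw [h1, coeff_monomial_same]
      · exact coeff_monomial_of_ne _ (Ne.symm h1)
      · exact coeff_zero _
    | add P Q hP hQ => rw [map_add, coeff_add, coeff_add, MvPolynomial.coeff_add, hP, hQ]
  rw [mem_exponents, coeff_coeff_toBivariate]

lemma bidegreeLE_toBivariate (P : MvPolynomial (Fin 2) R) :
    BidegreeLE (toBivariate R P) P.totalDegree := by
  intro e he
  have := MvPolynomial.le_totalDegree
    (MvPolynomial.mem_support_iff.2 (mem_exponents_toBivariate.1 he))
  rw [Finsupp.sum_fintype _ _ fun _ => rfl, Fin.sum_univ_two] at this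
  simp only [Fin.isValue, Finsupp.coe_add, Pi.add_apply, Finsupp.single_eq_same, ne_eq, zero_ne_one,
    not_false_eq_true, Finsupp.single_eq_of_ne, add_zero, one_ne_zero, zero_add] at this
  omega

lemma evalEval_toBivariate (P : MvPolynomial (Fin 2) R) (z t : R) :
    (toBivariate R P).evalEval t z = MvPolynomial.eval (fun i => if i = 0 then z else t) P := by
  induction P using MvPolynomial.induction_on with
  | C r => rw [toBivariate_C, evalEval_CC, MvPolynomial.eval_C]
  | add P Q hP hQ => rw [map_add, map_add, evalEval_add, hP, hQ]
  | mul_X P i hP =>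
    rw [map_mul, map_mul, evalEval_mul, hP, MvPolynomial.eval_X]
    congr 1
    fin_cases i
    · exact (congrArg _ toBivariate_X_zero).trans (evalEval_X t z)
    · exact (congrArg _ toBivariate_X_one).trans ((evalEval_C t z X).trans eval_X)

lemma toRat_toBivariate (P : MvPolynomial (Fin 2) ℤ) :
    toRat (toBivariate ℤ P) = toBivariate ℚ (MvPolynomial.map (Int.castRingHom ℚ) P) := by
  induction P using MvPolynomial.induction_on' with
  | monomial s r =>
    rw [toBivariate_monomial, MvPolynomial.map_monomial, toBivariate_monomial, toRat, map_monomial,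
      coe_mapRingHom, map_monomial]
  | add P Q hP hQ => rw [map_add, map_add, map_add, ← hP, ← hQ, toRat, Polynomial.map_add]; rfl

end ToBivariate

lemma finite_intZeros (F : ℤ[X][Y]) (Z W : ℝ) : (intZeros F Z W).Finite := by
  have mem_Icc {x : ℤ} {B : ℝ} (hx : |(x : ℝ)| ≤ B) : x ∈ Set.Icc (-⌊B⌋) ⌊B⌋ :=
    abs_le.1 (Int.le_floor.2 (by rwa [Int.cast_abs]))
  exact ((Set.finite_Icc (-⌊Z⌋) ⌊Z⌋).prod (Set.finite_Icc (-⌊W⌋) ⌊W⌋)).subset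
    fun q hq => ⟨mem_Icc hq.1, mem_Icc hq.2.1⟩

end ResolventCurve

open ResolventCurve in
theorem count_integral_points_on_resolvent_curve_general (d : ℕ) (α ε : ℝ) (hα : 0 < α)
    (hε : 0 < ε) :
    ∃ C : ℝ, ∀ m n : ℕ, 1 ≤ m → ∀ Φ : MvPolynomial (Fin 2) ℤ,
      Φ.totalDegree ≤ d →
      Irreducible (MvPolynomial.map (Int.castRingHom ℚ) Φ) →
      MvPolynomial.coeff (.single 0 m + .single 1 n) Φ ≠ 0 →
      ∀ H : ℝ, 2 ≤ H →
        (Set.ncard {p : ℤ × ℤ |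
            (|p.1| : ℝ) ≤ H ^ α ∧ (|p.2| : ℝ) ≤ H ∧
            MvPolynomial.eval (fun i => if i = 0 then p.1 else p.2) Φ = 0} : ℝ)
          ≤ C * H ^ (α / (α * m + n) + ε) := by
  obtain ⟨C, hC⟩ := exists_card_le d hα hε
  refine ⟨C, fun m n hm Φ hΦd hΦ hmn H hH => ?_⟩
  set F := toBivariate ℤ Φ
  have hF : Irreducible (toRat F) := by
    rw [toRat_toBivariate]
    exact (MulEquiv.irreducible_iff (toBivariate ℚ)).2 hΦ
  have hFd : BidegreeLE F d := (bidegreeLE_toBivariate Φ).mono hΦd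
  have hzeros : {p : ℤ × ℤ | (|p.1| : ℝ) ≤ H ^ α ∧ (|p.2| : ℝ) ≤ H ∧
      MvPolynomial.eval (fun i => if i = 0 then p.1 else p.2) Φ = 0} = intZeros F (H ^ α) H :=
    by simp only [F, intZeros, evalEval_toBivariate]
  have hfin := finite_intZeros F (H ^ α) H
  rw [hzeros, Set.ncard_eq_toFinset_card _ hfin]
  exact hC F hFd hF (m, n) (mem_exponents_toBivariate.2 hmn) hm H hH hfin.toFinset
    fun q => hfin.mem_toFinset.1

/-- Let `Φ ∈ ℤ[z, t]` be irreducible over `ℚ` such that the monomial `z^m` (with `m ≥ 1`)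
occurs in `Φ` with nonzero coefficient, and let `α ≥ 1`, `ε > 0`. Then for `H ≥ 2` the number
of integer pairs `(z, t)` with `|z| ≤ H^α`, `|t| ≤ H` and `Φ(z, t) = 0` is at most
`C·H^(1/m+ε)`, with `C` depending only on the total degree of `Φ`, on `α` and on `ε`.
Here the variable `0` of `Fin 2` plays the role of `z` and the variable `1` that of `t`. -/
theorem count_integral_points_on_resolvent_curve (d : ℕ) (α ε : ℝ) (hα : 1 ≤ α)
    (hε : 0 < ε) :
    ∃ C : ℝ, ∀ m : ℕ, 1 ≤ m → ∀ Φ : MvPolynomial (Fin 2) ℤ,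
      Φ.totalDegree = d →
      Irreducible (MvPolynomial.map (Int.castRingHom ℚ) Φ) →
      MvPolynomial.coeff (Finsupp.single (0 : Fin 2) m) Φ ≠ 0 →
      ∀ H : ℝ, 2 ≤ H →
        (Set.ncard {p : ℤ × ℤ |
            (|p.1| : ℝ) ≤ H ^ α ∧ (|p.2| : ℝ) ≤ H ∧
            MvPolynomial.eval (fun i => if i = 0 then p.1 else p.2) Φ = 0} : ℝ)
          ≤ C * H ^ (1 / (m : ℝ) + ε) := by
  have hα0 : 0 < α := one_pos.trans_le hα
  obtain ⟨C, hC⟩ := count_integral_points_on_resolvent_curve_general d α ε hα0 hε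
  exact ⟨C, fun m hm Φ hΦd hΦ hmΦ H hH => by
    simpa [div_mul_cancel_left₀ hα0.ne'] using hC m 0 hm Φ hΦd.le hΦ (by simpa using hmΦ) H hH⟩
end
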